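/- (Local drift condition for MALA.) Let U satisfy Assumption 1. Then there exist θ ∈ (0, β−c) and positive constants C, γ, K such that for every stepsize h ∈ (0,1) and every x ∈ ℝ^n with U(x) < h^{−1/2}, one step of MALA satisfies (P_h Φ_θ)(x) ≤ (e^{−γh} + C·U(x)⁴·h²)·Φ_θ(x) + (K/γ)·(1 − e^{−γh}), where (P_h Φ_θ)(x) = ∫_{ℝ^n} α_h(x,y)q_h(x,y)Φ_θ(y)dy + (1 − ∫_{ℝ^n} α_h(x,y)q_h(x,y)dy)·Φ_θ(x). In particular this quantity is finite. -/

import Mathlib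

/-!
With `s = √h` and a centred Gaussian `ξ`, the proposal is `y = x - s² ∇U(x) + s ξ`. One step changes
`exp (θ U)` on average by the acceptance probability times `exp (θ U y) - exp (θ U x)`. By the
trapezoidal rule the logarithm of the Metropolis ratio is `O((s U x)³)` and the increment of
`exp (θ U)` is `O(s U x)` relative to `exp (θ U x)`, so rejections cost only `O((s U x)⁴)`; pairing
`ξ` with `-ξ` removes the odd Taylor terms of the Euler step, whose remainder then has the same
order. For large `s ‖ξ‖`, where Taylor expansion fails, the acceptance probability is bounded by the
power `θ / β ≤ 1` of the Metropolis ratio; its product with `exp (θ U y)` is then at most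
`exp (θ U x + θ ‖ξ‖² / 4)`, which is integrable because `θ < β`. What is left is
`exp (θ U) + (s² / β) Δ exp (θ U)` at the mean of the proposal. Its exponential rate is
`-θ s² |∇U|² + (s² / β) (θ ΔU + θ² |∇U|²)` up to `O((s U x)⁴)`, and the drift condition with
`c + θ ≤ β` makes this at most `-(θ d / β) s²`.
-/

open MeasureTheory Real Filter
open scoped ENNReal

noncomputable section

abbrev Euc (n : ℕ) := EuclideanSpace ℝ (Fin n)

/-- Second derivative of `U` at `x` as a bilinear form. -/
def D2 {n : ℕ} (U : Euc n → ℝ) (x v w : Euc n) : ℝ :=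
  iteratedFDeriv ℝ 2 U x ![v, w]

/-- Laplacian of `U` at `x`. -/
def lapl {n : ℕ} (U : Euc n → ℝ) (x : Euc n) : ℝ :=
  ∑ i, D2 U x (EuclideanSpace.single i 1) (EuclideanSpace.single i 1)

/-- Assumption 1 on the potential `U`. -/
structure Assumption1 (n : ℕ) (β : ℝ) (U : Euc n → ℝ) where
  smooth : ContDiff ℝ 4 U
  c : ℝ
  d : ℝ
  EB : ℝ
  c_pos : 0 < c
  c_lt : c < β
  d_pos : 0 < d
  one_le : ∀ x, 1 ≤ U x
  quad_growth : ∀ C > (0:ℝ), ∃ E > (0:ℝ), ∀ x, U x > E → C * (1 + ‖x‖ ^ 2) ≤ U x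
  driftB : ∀ x, U x > EB → lapl U x ≤ c * ‖gradient U x‖ ^ 2 - d * U x
  hess_lb : ∃ C : ℝ, 0 ≤ C ∧ ∀ x η : Euc n, -C * ‖η‖ ^ 2 ≤ D2 U x η η
  deriv_bound : ∃ C > (0:ℝ), ∀ x,
    ‖iteratedFDeriv ℝ 4 U x‖ ⊔ ‖iteratedFDeriv ℝ 3 U x‖ ⊔ ‖iteratedFDeriv ℝ 2 U x‖ ⊔
      ‖gradient U x‖ ≤ C * U x

/-- The Gibbs measure with density `Z⁻¹ exp(-β U x)`. -/
def gibbs (n : ℕ) (β : ℝ) (U : Euc n → ℝ) : Measure (Euc n) :=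
  volume.withDensity fun x => ENNReal.ofReal (exp (-β * U x) / ∫ y, exp (-β * U y))

/-- Total variation distance, `‖μ - ν‖_TV = 2 sup_A |μ(A) - ν(A)|`. -/
def tvDist {α : Type*} [MeasurableSpace α] (μ ν : Measure α) : ℝ :=
  2 * ⨆ A : {A : Set α // MeasurableSet A}, |(μ A.1).toReal - (ν A.1).toReal|

/-- Forward Euler transition density `q_h(x,y)`. -/
def eulerDensity (n : ℕ) (β h : ℝ) (U : Euc n → ℝ) (x y : Euc n) : ℝ :=
  (4 * π * β⁻¹ * h) ^ (-(n : ℝ) / 2) *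
    exp (-‖y - x + h • gradient U x‖ ^ 2 / (4 * β⁻¹ * h))

/-- MALA acceptance probability `α_h(x,y)`. -/
def accept (n : ℕ) (β h : ℝ) (U : Euc n → ℝ) (x y : Euc n) : ℝ :=
  min 1 ((eulerDensity n β h U y x * exp (-β * U y)) /
         (eulerDensity n β h U x y * exp (-β * U x)))

/-- One-step MALA transition kernel. -/
def malaKernel (n : ℕ) (β h : ℝ) (U : Euc n → ℝ) (x : Euc n) : Measure (Euc n) :=
  volume.withDensity (fun y => ENNReal.ofReal (accept n β h U x y * eulerDensity n β h U x y))
  + (1 - ∫⁻ y, ENNReal.ofReal (accept n β h U x y * eulerDensity n β h U x y)) • Measure.dirac x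

/-- `k`-step iterate of a transition kernel. -/
def iterKernel {α : Type*} [MeasurableSpace α] (κ : α → Measure α) : ℕ → α → Measure α
  | 0, x => Measure.dirac x
  | k + 1, x => (iterKernel κ k x).bind κ

/-- The level set `R_h = {x : U(x) < E_⋆ h^{-1/4}}`. -/
def Rset (n : ℕ) (h Estar : ℝ) (U : Euc n → ℝ) : Set (Euc n) :=
  {x | U x < Estar * h ^ (-(1:ℝ) / 4)}

open scoped Classical in
/-- Patched MALA acceptance probability. -/
def acceptBar (n : ℕ) (β h Estar : ℝ) (U : Euc n → ℝ) (x y : Euc n) : ℝ :=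
  if x ∈ Rset n h Estar U ∧ y ∈ Rset n h Estar U then accept n β h U x y else 0

/-- One-step patched MALA transition kernel. -/
def patchedKernel (n : ℕ) (β h Estar : ℝ) (U : Euc n → ℝ) (x : Euc n) : Measure (Euc n) :=
  volume.withDensity
    (fun y => ENNReal.ofReal (acceptBar n β h Estar U x y * eulerDensity n β h U x y))
  + (1 - ∫⁻ y, ENNReal.ofReal (acceptBar n β h Estar U x y * eulerDensity n β h U x y)) •
      Measure.dirac x

/-- Standard Gaussian measure `N(0, I)` on `ℝ^n`. -/
def stdGaussian (n : ℕ) : Measure (Euc n) :=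
  volume.withDensity fun ξ => ENNReal.ofReal ((2 * π) ^ (-(n : ℝ) / 2) * exp (-‖ξ‖ ^ 2 / 2))

/-- Forward Euler transition kernel. -/
def eulerKernel (n : ℕ) (β h : ℝ) (U : Euc n → ℝ) (x : Euc n) : Measure (Euc n) :=
  volume.withDensity fun y => ENNReal.ofReal (eulerDensity n β h U x y)

section Taylor

variable {f : ℝ → ℝ}

theorem exists_taylor_lagrange_eq {n : ℕ} (hf : ContDiff ℝ (n + 1) f) {x₀ x : ℝ} (hx : x₀ ≠ x) :
    ∃ t ∈ Set.uIoo x₀ x, f x =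
      ∑ k ∈ Finset.range (n + 1), iteratedDeriv k f x₀ * (x - x₀) ^ k / k.factorial +
        iteratedDeriv (n + 1) f t * (x - x₀) ^ (n + 1) / (n + 1).factorial := by
  obtain ⟨t, ht, h⟩ := taylor_mean_remainder_lagrange_iteratedDeriv hx hf.contDiffOn
  refine ⟨t, ht, ?_⟩
  rw [← h, taylor_within_apply, eq_comm, add_comm, sub_add_eq_add_sub, sub_eq_iff_eq_add]
  congr 1
  refine Finset.sum_congr rfl fun k hk => ?_
  rw [iteratedDerivWithin_eq_iteratedDeriv (uniqueDiffOn_uIcc hx)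
    ((hf.of_le (by exact_mod_cast (Finset.mem_range.1 hk).le)).contDiffAt) Set.left_mem_uIcc,
    smul_eq_mul]
  ring

theorem add_le_of_iteratedDeriv_four_le (hf : ContDiff ℝ 4 f) {M : ℝ}
    (hM : ∀ t ∈ Set.Icc (-1 : ℝ) 1, iteratedDeriv 4 f t ≤ M) :
    f 1 + f (-1) ≤ 2 * f 0 + iteratedDeriv 2 f 0 + M / 12 := by
  obtain ⟨t, ht, h⟩ := exists_taylor_lagrange_eq (n := 3) hf zero_ne_one
  obtain ⟨r, hr, h'⟩ := exists_taylor_lagrange_eq (n := 3) hf (neg_ne_zero.2 one_ne_zero).symm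
  rw [Set.uIoo_of_lt one_pos] at ht
  rw [Set.uIoo_of_gt (by norm_num)] at hr
  have hMt := hM t ⟨by linarith [ht.1], ht.2.le⟩
  have hMr := hM r ⟨hr.1.le, by linarith [hr.2]⟩
  norm_num [Finset.sum_range_succ, Nat.factorial] at h h'
  linarith

theorem le_of_iteratedDeriv_two_le (hf : ContDiff ℝ 2 f) {M : ℝ}
    (hM : ∀ t ∈ Set.Icc (0 : ℝ) 1, iteratedDeriv 2 f t ≤ M) :
    f 1 ≤ f 0 + iteratedDeriv 1 f 0 + M / 2 := by
  obtain ⟨t, ht, h⟩ := exists_taylor_lagrange_eq (n := 1) hf zero_ne_one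
  rw [Set.uIoo_of_lt one_pos] at ht
  have hMt := hM t ⟨ht.1.le, ht.2.le⟩
  norm_num [Finset.sum_range_succ, Nat.factorial] at h
  rw [iteratedDeriv_one]
  linarith

theorem abs_sub_sub_trapezoid_le (hf : ContDiff ℝ 3 f) {M : ℝ}
    (hM : ∀ t ∈ Set.Icc (0 : ℝ) 1, |iteratedDeriv 3 f t| ≤ M) :
    |f 1 - f 0 - (iteratedDeriv 1 f 0 + iteratedDeriv 1 f 1) / 2| ≤ 5 / 12 * M := by
  obtain ⟨t, ht, h⟩ := exists_taylor_lagrange_eq (n := 2) hf zero_ne_one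
  have hf' : ContDiff ℝ 2 (deriv f) := (contDiff_succ_iff_deriv (n := 2).1 hf).2.2
  obtain ⟨r, hr, h'⟩ := exists_taylor_lagrange_eq (n := 1) hf' zero_ne_one
  rw [Set.uIoo_of_lt one_pos] at ht hr
  have hMt := abs_le.1 (hM t ⟨ht.1.le, ht.2.le⟩)
  have hMr := abs_le.1 (hM r ⟨hr.1.le, hr.2.le⟩)
  norm_num [Finset.sum_range_succ, Nat.factorial, ← iteratedDeriv_succ'] at h h'
  rw [iteratedDeriv_one, abs_le]
  constructor <;> linarith

end Taylor

section Line

variable {E F : Type*} [NormedAddCommGroup E] [NormedSpace ℝ E] [NormedAddCommGroup F]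
  [NormedSpace ℝ F] {f : E → F} {k : ℕ}

theorem iteratedDeriv_comp_line (hf : ContDiff ℝ k f) (z w : E) (t : ℝ) :
    iteratedDeriv k (fun t : ℝ => f (z + t • w)) t =
      iteratedFDeriv ℝ k f (z + t • w) fun _ => w := by
  have h := (ContinuousLinearMap.toSpanSingleton ℝ w).iteratedFDeriv_comp_right
    (f := fun v => f (z + v)) (hf.comp (contDiff_const.add contDiff_id)) t le_rfl
  rw [iteratedFDeriv_comp_add_left] at h
  rw [iteratedDeriv_eq_iteratedFDeriv]
  have h' := congrArg (fun T => T fun _ => (1 : ℝ)) h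
  simpa [Function.comp_def] using h'

theorem norm_iteratedDeriv_comp_line_le (hf : ContDiff ℝ k f) (z w : E) (t : ℝ) :
    ‖iteratedDeriv k (fun t : ℝ => f (z + t • w)) t‖ ≤
      ‖iteratedFDeriv ℝ k f (z + t • w)‖ * ‖w‖ ^ k := by
  rw [iteratedDeriv_comp_line hf]
  simpa using (iteratedFDeriv ℝ k f (z + t • w)).le_opNorm fun _ => w

end Line

section ExpComp

variable {E : Type*} [NormedAddCommGroup E] [NormedSpace ℝ E] {f : E → ℝ}

theorem iteratedFDeriv_two_exp_comp (hf : ContDiff ℝ 2 f) (z v w : E) :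
    iteratedFDeriv ℝ 2 (fun y => exp (f y)) z ![v, w] =
      exp (f z) * (iteratedFDeriv ℝ 2 f z ![v, w] + fderiv ℝ f z v * fderiv ℝ f z w) := by
  have hd : Differentiable ℝ f := hf.differentiable two_ne_zero
  have hd' : Differentiable ℝ (fderiv ℝ f) :=
    (hf.fderiv_right (m := 1) le_rfl).differentiable one_ne_zero
  have h : fderiv ℝ (fun y => exp (f y)) = fun y => exp (f y) • fderiv ℝ f y :=
    funext fun y => fderiv_exp (hd y)
  rw [iteratedFDeriv_two_apply, iteratedFDeriv_two_apply, h,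
    fderiv_fun_smul (hd z).exp (hd' z), fderiv_exp (hd z)]
  simp only [Matrix.cons_val_zero, Matrix.cons_val_one, FunLike.coe_add, FunLike.coe_smul,
    Pi.add_apply, Pi.smul_apply, ContinuousLinearMap.smulRight_apply, smul_eq_mul]
  ring

theorem norm_iteratedFDeriv_exp_comp_le {k : ℕ} (hf : ContDiff ℝ k f) {z : E} {D : ℝ}
    (hD : ∀ i, 1 ≤ i → i ≤ k → ‖iteratedFDeriv ℝ i f z‖ ≤ D ^ i) :
    ‖iteratedFDeriv ℝ k (fun y => exp (f y)) z‖ ≤ k.factorial * exp (f z) * D ^ k :=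
  norm_iteratedFDeriv_comp_le contDiff_exp hf le_rfl z
    (fun i _ => by
      simp [norm_iteratedFDeriv_eq_norm_iteratedDeriv, iteratedDeriv_eq_iterate, iter_deriv_exp])
    hD

theorem add_sub_le_of_norm_iteratedFDeriv_four_le (hf : ContDiff ℝ 4 f) {z w : E} {M : ℝ}
    (hM : ∀ t ∈ Set.Icc (-1 : ℝ) 1, ‖iteratedFDeriv ℝ 4 f (z + t • w)‖ ≤ M) :
    f (z + w) + f (z - w) ≤
      2 * f z + iteratedFDeriv ℝ 2 f z ![w, w] + M * ‖w‖ ^ 4 / 12 := by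
  have h := add_le_of_iteratedDeriv_four_le (f := fun t : ℝ => f (z + t • w))
    (hf.comp (by fun_prop)) (M := M * ‖w‖ ^ 4) fun t ht =>
      (le_norm_self _).trans ((norm_iteratedDeriv_comp_line_le hf z w t).trans
        (mul_le_mul_of_nonneg_right (hM t ht) (by positivity)))
  have hw : (![w, w] : Fin 2 → E) = fun _ => w := by ext i; fin_cases i <;> rfl
  rw [iteratedDeriv_comp_line (hf.of_le (by norm_num))] at h
  rw [hw]
  simpa [← sub_eq_add_neg] using h

theorem iteratedFDeriv_two_smul_smul (f : E → ℝ) (z w : E) (s : ℝ) :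
    iteratedFDeriv ℝ 2 f z ![s • w, s • w] = s ^ 2 * iteratedFDeriv ℝ 2 f z ![w, w] := by
  simp_rw [← bilinearIteratedFDerivTwo_eq_iteratedFDeriv, map_smul, LinearMap.smul_apply,
    smul_eq_mul, sq, mul_assoc]

end ExpComp

section Gradient

variable {E : Type*} [NormedAddCommGroup E] [InnerProductSpace ℝ E] [CompleteSpace E]
  {f : E → ℝ}

theorem iteratedDeriv_one_comp_line (hf : ContDiff ℝ 1 f) (z w : E) (t : ℝ) :
    iteratedDeriv 1 (fun t : ℝ => f (z + t • w)) t = inner ℝ (gradient f (z + t • w)) w := by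
  rw [iteratedDeriv_comp_line hf, iteratedFDeriv_one_apply, inner_gradient_left]

end Gradient

section Laplacian

variable {E : Type*} [NormedAddCommGroup E] [InnerProductSpace ℝ E] [FiniteDimensional ℝ E]
  {f : E → ℝ}

open Laplacian

theorem laplacian_exp_comp (hf : ContDiff ℝ 2 f) (z : E) :
    Δ (fun y => exp (f y)) z = exp (f z) * (Δ f z + ‖gradient f z‖ ^ 2) := by
  let e := stdOrthonormalBasis ℝ E
  have hgrad : ‖gradient f z‖ ^ 2 = ∑ i, fderiv ℝ f z (e i) * fderiv ℝ f z (e i) := by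
    rw [← e.sum_sq_norm_inner_left (gradient f z)]
    refine Finset.sum_congr rfl fun i _ => ?_
    rw [inner_gradient_left, norm_eq_abs, sq_abs, sq]
  rw [InnerProductSpace.laplacian_eq_iteratedFDeriv_orthonormalBasis _ e,
    InnerProductSpace.laplacian_eq_iteratedFDeriv_orthonormalBasis _ e, hgrad,
    ← Finset.sum_add_distrib, Finset.mul_sum]
  exact Finset.sum_congr rfl fun i _ => iteratedFDeriv_two_exp_comp hf z _ _

theorem laplacian_exp_mul (hf : ContDiff ℝ 2 f) (θ : ℝ) (z : E) :
    Δ (fun y => exp (θ * f y)) z =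
      exp (θ * f z) * (θ * Δ f z + θ ^ 2 * ‖gradient f z‖ ^ 2) := by
  have hgrad : gradient (fun y => θ * f y) z = θ • gradient f z := by
    simp_rw [gradient, fderiv_const_mul (hf.differentiable two_ne_zero z), map_smul]
  have hlap : Δ (fun y => θ * f y) z = θ * Δ f z :=
    InnerProductSpace.laplacian_smul θ hf.contDiffAt
  rw [laplacian_exp_comp (contDiff_const.mul hf), hgrad, hlap, norm_smul, mul_pow, norm_eq_abs,
    sq_abs]

theorem laplacian_le_finrank_mul (z : E) :
    Δ f z ≤ Module.finrank ℝ E * ‖iteratedFDeriv ℝ 2 f z‖ := by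
  rw [InnerProductSpace.laplacian_eq_iteratedFDeriv_stdOrthonormalBasis]
  calc ∑ i, iteratedFDeriv ℝ 2 f z ![stdOrthonormalBasis ℝ E i, stdOrthonormalBasis ℝ E i]
      ≤ ∑ _i : Fin (Module.finrank ℝ E), ‖iteratedFDeriv ℝ 2 f z‖ :=
        Finset.sum_le_sum fun i _ =>
          (le_norm_self _).trans (((iteratedFDeriv ℝ 2 f z).le_opNorm _).trans_eq (by simp))
    _ = Module.finrank ℝ E * ‖iteratedFDeriv ℝ 2 f z‖ := by simp

end Laplacian

theorem bilin_apply_self_eq_sum {E ι : Type*} [NormedAddCommGroup E] [InnerProductSpace ℝ E]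
    [Fintype ι] (B : E →ₗ[ℝ] E →ₗ[ℝ] ℝ) (e : OrthonormalBasis ι ℝ E) (ξ : E) :
    B ξ ξ = ∑ i, ∑ j, inner ℝ (e i) ξ * inner ℝ (e j) ξ * B (e i) (e j) := by
  rw [← LinearMap.sum_repr_mul_repr_mul e.toBasis e.toBasis ξ ξ]
  simp [Finsupp.sum_fintype, OrthonormalBasis.repr_apply_apply, mul_assoc]

section Gaussian

variable {E : Type*} [NormedAddCommGroup E] [InnerProductSpace ℝ E] [FiniteDimensional ℝ E]
  [MeasurableSpace E] [BorelSpace E] {b : ℝ}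

open Laplacian

theorem integrable_exp_neg_mul_norm_sq (hb : 0 < b) :
    Integrable (fun ξ : E => exp (-b * ‖ξ‖ ^ 2)) :=
  .of_integral_ne_zero <| by
    rw [GaussianFourier.integral_rexp_neg_mul_sq_norm hb]
    positivity

variable (E b) in
/-- The centred isotropic Gaussian probability measure with density proportional to
`exp (-b * ‖ξ‖ ^ 2)`, that is, with covariance `(2 * b)⁻¹ • id`. -/
def isotropicGaussian : Measure E :=
  volume.tilted fun ξ => -b * ‖ξ‖ ^ 2

namespace isotropicGaussian

theorem isProbabilityMeasure (hb : 0 < b) : IsProbabilityMeasure (isotropicGaussian E b) :=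
  isProbabilityMeasure_tilted (integrable_exp_neg_mul_norm_sq hb)

theorem integral_eq (hb : 0 < b) (f : E → ℝ) :
    ∫ ξ, f ξ ∂isotropicGaussian E b =
      (π / b) ^ (-(Module.finrank ℝ E : ℝ) / 2) * ∫ ξ, f ξ * exp (-b * ‖ξ‖ ^ 2) := by
  rw [isotropicGaussian, integral_tilted, GaussianFourier.integral_rexp_neg_mul_sq_norm hb,
    ← integral_const_mul]
  congr 1 with ξ
  rw [neg_div, rpow_neg (by positivity), smul_eq_mul]
  ring

theorem integrable_iff (hb : 0 < b) {f : E → ℝ} :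
    Integrable f (isotropicGaussian E b) ↔ Integrable fun ξ => f ξ * exp (-b * ‖ξ‖ ^ 2) := by
  simp_rw [isotropicGaussian, integrable_tilted_iff (integrable_exp_neg_mul_norm_sq hb),
    smul_eq_mul, mul_comm]

theorem integral_comp_neg (hb : 0 < b) (f : E → ℝ) :
    ∫ ξ, f (-ξ) ∂isotropicGaussian E b = ∫ ξ, f ξ ∂isotropicGaussian E b := by
  rw [integral_eq hb, integral_eq hb, ← integral_neg_eq_self]
  simp

theorem integrable_comp_neg (hb : 0 < b) {f : E → ℝ}
    (hf : Integrable f (isotropicGaussian E b)) :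
    Integrable (fun ξ => f (-ξ)) (isotropicGaussian E b) := by
  rw [integrable_iff hb] at hf ⊢
  simpa using hf.comp_neg

theorem integrable_exp_mul_norm_sq {a : ℝ} (hab : a < b) (hb : 0 < b) :
    Integrable (fun ξ : E => exp (a * ‖ξ‖ ^ 2)) (isotropicGaussian E b) := by
  rw [integrable_iff hb]
  refine (integrable_exp_neg_mul_norm_sq (sub_pos.2 hab)).congr (.of_forall fun ξ => ?_)
  dsimp only
  rw [← exp_add]
  ring_nf

theorem integrable_pow_mul_exp {a r κ : ℝ} (hab : a < b) (hb : 0 < b) (hr : 0 ≤ r) (k : ℕ) :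
    Integrable (fun ξ : E => (r + ‖ξ‖) ^ k * exp (κ * (r + ‖ξ‖) + a * ‖ξ‖ ^ 2))
      (isotropicGaussian E b) := by
  obtain ⟨a', ha, ha'⟩ := exists_between hab
  set ε := a' - a
  have hε : 0 < ε := sub_pos.2 ha
  refine ((integrable_exp_mul_norm_sq ha' hb).const_mul
    (k.factorial * exp ((κ + 1) * r + (κ + 1) ^ 2 / (4 * ε)))).mono'
    (by fun_prop) (.of_forall fun ξ => ?_)
  have hpow := (div_le_iff₀ (by positivity)).1 (pow_div_factorial_le_exp (x := r + ‖ξ‖)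
    (by positivity) k)
  have hsq : (κ + 1) * ‖ξ‖ ≤ (κ + 1) ^ 2 / (4 * ε) + ε * ‖ξ‖ ^ 2 := by
    have : (κ + 1) ^ 2 / (4 * ε) + ε * ‖ξ‖ ^ 2 - (κ + 1) * ‖ξ‖ =
        (κ + 1 - 2 * ε * ‖ξ‖) ^ 2 / (4 * ε) := by field_simp; ring
    linarith [show 0 ≤ (κ + 1 - 2 * ε * ‖ξ‖) ^ 2 / (4 * ε) by positivity]
  rw [norm_of_nonneg (by positivity)]
  calc (r + ‖ξ‖) ^ k * exp (κ * (r + ‖ξ‖) + a * ‖ξ‖ ^ 2)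
      ≤ (exp (r + ‖ξ‖) * k.factorial) * exp (κ * (r + ‖ξ‖) + a * ‖ξ‖ ^ 2) := by gcongr
    _ = k.factorial * exp ((κ + 1) * r + ((κ + 1) * ‖ξ‖ + a * ‖ξ‖ ^ 2)) := by
      rw [mul_comm (exp _), mul_assoc, ← exp_add]
      ring_nf
    _ ≤ k.factorial * exp ((κ + 1) * r +
        (((κ + 1) ^ 2 / (4 * ε) + ε * ‖ξ‖ ^ 2) + a * ‖ξ‖ ^ 2)) := by gcongr
    _ = k.factorial * exp ((κ + 1) * r + (κ + 1) ^ 2 / (4 * ε)) * exp (a' * ‖ξ‖ ^ 2) := by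
      rw [mul_assoc, ← exp_add]
      simp only [ε]
      ring_nf

theorem integrable_inner_mul_inner (hb : 0 < b) (v w : E) :
    Integrable (fun ξ : E => inner ℝ v ξ * inner ℝ w ξ) (isotropicGaussian E b) := by
  refine ((integrable_pow_mul_exp (κ := 0) hb hb le_rfl 2).const_mul (‖v‖ * ‖w‖)).mono'
    (by fun_prop) (.of_forall fun ξ => ?_)
  have h := mul_le_mul (norm_inner_le_norm (𝕜 := ℝ) v ξ) (norm_inner_le_norm (𝕜 := ℝ) w ξ)
    (norm_nonneg _) (by positivity)
  simp only [zero_add, zero_mul, exp_zero, mul_one, norm_mul]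
  linarith

theorem integrable_inner (hb : 0 < b) (v : E) :
    Integrable (fun ξ : E => inner ℝ v ξ) (isotropicGaussian E b) := by
  refine ((integrable_pow_mul_exp (κ := 0) hb hb le_rfl 1).const_mul ‖v‖).mono'
    (by fun_prop) (.of_forall fun ξ => ?_)
  simpa using norm_inner_le_norm (𝕜 := ℝ) v ξ

theorem integral_inner_mul_inner (hb : 0 < b) (v w : E) :
    ∫ ξ, inner ℝ v ξ * inner ℝ w ξ ∂isotropicGaussian E b = inner ℝ v w / (2 * b) := by
  have hprob := isProbabilityMeasure (E := E) hb
  have hfderiv (ξ : E) : fderiv ℝ (fun y : E => exp (-b * ‖y‖ ^ 2)) ξ w =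
      -(2 * b) * (inner ℝ w ξ * exp (-b * ‖ξ‖ ^ 2)) := by
    have h := ((hasStrictFDerivAt_norm_sq ξ).hasFDerivAt.const_mul (-b)).exp.fderiv
    rw [h]
    simp [real_inner_comm]
    ring
  have hinner (ξ : E) : fderiv ℝ (fun y : E => inner ℝ v y) ξ w = inner ℝ v w := by
    rw [show (fun y : E => inner ℝ v y) = innerSL ℝ v from rfl, ContinuousLinearMap.fderiv]
    rfl
  have hparts := integral_mul_fderiv_eq_neg_fderiv_mul_of_integrable
    (μ := (volume : Measure E)) (f := fun y => inner ℝ v y)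
    (g := fun y => exp (-b * ‖y‖ ^ 2)) (v := w)
    (by simpa only [hinner] using (integrable_exp_neg_mul_norm_sq hb).const_mul (inner ℝ v w))
    (by
      refine (((integrable_iff hb).1 (integrable_inner_mul_inner hb v w)).const_mul
        (-(2 * b))).congr (.of_forall fun ξ => ?_)
      simp only [hfderiv]
      ring)
    ((integrable_iff hb).1 (integrable_inner (E := E) hb v))
    (fun _ _ => (innerSL ℝ v).differentiableAt)
    (fun _ _ => ((contDiff_norm_sq ℝ (n := 1)).differentiable one_ne_zero).const_mul (-b) |>.exp _)
  have hone : ∫ _, inner ℝ v w ∂isotropicGaussian E b = inner ℝ v w := by simp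
  rw [integral_eq hb] at hone ⊢
  simp only [hfderiv, hinner, integral_const_mul, mul_left_comm _ (-(2 * b)),
    ← mul_assoc (inner ℝ v _)] at hparts
  rw [integral_const_mul] at hone
  rw [eq_div_iff (by positivity)]
  linear_combination hone - (π / b) ^ (-(Module.finrank ℝ E : ℝ) / 2) * hparts

theorem integrable_bilin (hb : 0 < b) (B : E →ₗ[ℝ] E →ₗ[ℝ] ℝ) :
    Integrable (fun ξ => B ξ ξ) (isotropicGaussian E b) := by
  let e := stdOrthonormalBasis ℝ E
  simp_rw [bilin_apply_self_eq_sum B e]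
  exact integrable_finsetSum _ fun i _ => integrable_finsetSum _ fun j _ =>
    (integrable_inner_mul_inner hb (e i) (e j)).mul_const _

theorem integral_bilin (hb : 0 < b) (B : E →ₗ[ℝ] E →ₗ[ℝ] ℝ) {ι : Type*} [Fintype ι]
    (e : OrthonormalBasis ι ℝ E) :
    ∫ ξ, B ξ ξ ∂isotropicGaussian E b = (∑ i, B (e i) (e i)) / (2 * b) := by
  classical
  have hint (i j : ι) := integrable_inner_mul_inner hb (e i) (e j)
  rw [integral_congr_ae (.of_forall (bilin_apply_self_eq_sum B e)),
    integral_finsetSum _ fun i _ => integrable_finsetSum _ fun j _ => (hint i j).mul_const _,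
    Finset.sum_div]
  refine Finset.sum_congr rfl fun i _ => ?_
  rw [integral_finsetSum _ fun j _ => (hint i j).mul_const _]
  simp_rw [integral_mul_const, integral_inner_mul_inner hb, e.inner_eq_ite]
  simp only [ite_div, zero_div, ite_mul, zero_mul, Finset.sum_ite_eq, Finset.mem_univ, if_true]
  ring

theorem integrable_iteratedFDeriv_two (hb : 0 < b) (f : E → ℝ) (z : E) :
    Integrable (fun ξ => iteratedFDeriv ℝ 2 f z ![ξ, ξ]) (isotropicGaussian E b) := by
  simpa only [bilinearIteratedFDerivTwo_eq_iteratedFDeriv] using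
    integrable_bilin hb (bilinearIteratedFDerivTwo ℝ f z)

theorem integral_iteratedFDeriv_two (hb : 0 < b) (f : E → ℝ) (z : E) :
    ∫ ξ, iteratedFDeriv ℝ 2 f z ![ξ, ξ] ∂isotropicGaussian E b = Δ f z / (2 * b) := by
  rw [InnerProductSpace.laplacian_eq_iteratedFDeriv_stdOrthonormalBasis]
  simpa only [bilinearIteratedFDerivTwo_eq_iteratedFDeriv] using
    integral_bilin hb (bilinearIteratedFDerivTwo ℝ f z) (stdOrthonormalBasis ℝ E)

end isotropicGaussian

end Gaussian

/-- The part of Assumption 1 that drives the local estimates: `U` is `C⁴`, bounded below by `1`,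
and its derivatives of order one to four are controlled by `C * U`. -/
structure TamePotential {E : Type*} [NormedAddCommGroup E] [NormedSpace ℝ E] (U : E → ℝ)
    (C : ℝ) : Prop where
  contDiff : ContDiff ℝ 4 U
  one_le : ∀ x, 1 ≤ U x
  norm_iteratedFDeriv_le : ∀ k : ℕ, 1 ≤ k → k ≤ 4 → ∀ x, ‖iteratedFDeriv ℝ k U x‖ ≤ C * U x

/-- The constant replacing `C` in the derivative bounds of a tame potential when the value of the
potential is taken at the centre of a ball of radius `1 + C` instead of at the current point. -/
def localConst (C : ℝ) : ℝ :=
  C * exp (C * (1 + C))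

namespace TamePotential

section NormedSpace

variable {E : Type*} [NormedAddCommGroup E] [NormedSpace ℝ E] {U : E → ℝ} {C θ : ℝ} {x y z : E}

theorem pos (P : TamePotential U C) (x : E) : 0 < U x :=
  one_pos.trans_le (P.one_le x)

theorem differentiable (P : TamePotential U C) : Differentiable ℝ U :=
  P.contDiff.differentiable four_ne_zero

theorem norm_fderiv_le (P : TamePotential U C) (x : E) : ‖fderiv ℝ U x‖ ≤ C * U x :=
  norm_iteratedFDeriv_one (𝕜 := ℝ) U ▸ P.norm_iteratedFDeriv_le 1 le_rfl (by norm_num) x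

theorem nonneg (P : TamePotential U C) : 0 ≤ C :=
  nonneg_of_mul_nonneg_left ((norm_nonneg _).trans (P.norm_fderiv_le 0)) (P.pos 0)

theorem localConst_nonneg (P : TamePotential U C) : 0 ≤ localConst C :=
  mul_nonneg P.nonneg (exp_pos _).le

theorem le_mul_exp_norm_sub (P : TamePotential U C) (x y : E) :
    U y ≤ U x * exp (C * ‖y - x‖) := by
  have hlip : ‖log (U y) - log (U x)‖ ≤ C * ‖y - x‖ :=
    convex_univ.norm_image_sub_le_of_norm_fderiv_le
      (fun z _ => (P.differentiable z).log (P.pos z).ne')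
      (fun z _ => by
        rw [fderiv.log (P.differentiable z) (P.pos z).ne', norm_smul, norm_inv,
          norm_of_nonneg (P.pos z).le, inv_mul_le_iff₀ (P.pos z), mul_comm]
        exact P.norm_fderiv_le z)
      (Set.mem_univ x) (Set.mem_univ y)
  rw [← log_le_log_iff (P.pos y) (mul_pos (P.pos x) (exp_pos _)),
    log_mul (P.pos x).ne' (exp_pos _).ne', log_exp]
  linarith [le_norm_self (log (U y) - log (U x))]

theorem norm_iteratedFDeriv_le_of_norm_sub_le (P : TamePotential U C) {k : ℕ} (hk : 1 ≤ k)
    (hk4 : k ≤ 4) (hz : ‖z - x‖ ≤ 1 + C) :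
    ‖iteratedFDeriv ℝ k U z‖ ≤ localConst C * U x := by
  have hC := P.nonneg
  have hx := P.pos x
  calc ‖iteratedFDeriv ℝ k U z‖
      ≤ C * U z := P.norm_iteratedFDeriv_le k hk hk4 z
    _ ≤ C * (U x * exp (C * ‖z - x‖)) := by gcongr; exact P.le_mul_exp_norm_sub x z
    _ ≤ C * (U x * exp (C * (1 + C))) := by gcongr
    _ = localConst C * U x := by rw [localConst]; ring

theorem norm_fderiv_le_of_norm_sub_le (P : TamePotential U C) (hz : ‖z - x‖ ≤ 1 + C) :
    ‖fderiv ℝ U z‖ ≤ localConst C * U x :=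
  norm_iteratedFDeriv_one (𝕜 := ℝ) U ▸
    P.norm_iteratedFDeriv_le_of_norm_sub_le le_rfl (by norm_num) hz

theorem abs_sub_le (P : TamePotential U C) (hz : ‖z - x‖ ≤ 1 + C) :
    |U z - U x| ≤ localConst C * U x * ‖z - x‖ :=
  (convex_closedBall x (1 + C)).norm_image_sub_le_of_norm_fderiv_le
    (fun _ _ => P.differentiable _)
    (fun _ hy => P.norm_fderiv_le_of_norm_sub_le (mem_closedBall_iff_norm.1 hy))
    (Metric.mem_closedBall_self (by linarith [P.nonneg])) (mem_closedBall_iff_norm.2 hz)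

theorem norm_fderiv_sub_le (P : TamePotential U C) (hz : ‖z - x‖ ≤ 1 + C) :
    ‖fderiv ℝ U z - fderiv ℝ U x‖ ≤ localConst C * U x * ‖z - x‖ := by
  have hd : Differentiable ℝ (fderiv ℝ U) :=
    (P.contDiff.fderiv_right (m := 3) (by norm_num)).differentiable three_ne_zero
  refine (convex_closedBall x (1 + C)).norm_image_sub_le_of_norm_fderiv_le (fun _ _ => hd _)
    (fun y hy => ?_) (Metric.mem_closedBall_self (by linarith [P.nonneg]))
    (mem_closedBall_iff_norm.2 hz)
  rw [← norm_iteratedFDeriv_one, norm_iteratedFDeriv_fderiv]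
  exact P.norm_iteratedFDeriv_le_of_norm_sub_le (by norm_num) (by norm_num)
    (mem_closedBall_iff_norm.1 hy)

theorem abs_iteratedDeriv_comp_line_le (P : TamePotential U C) {k : ℕ} (hk : 1 ≤ k) (hk4 : k ≤ 4)
    {v : E} (hv : ‖v‖ ≤ 1 + C) {t : ℝ} (ht : t ∈ Set.Icc (0 : ℝ) 1) :
    |iteratedDeriv k (fun t : ℝ => U (x + t • v)) t| ≤ localConst C * U x * ‖v‖ ^ k := by
  refine (norm_iteratedDeriv_comp_line_le (P.contDiff.of_le (by exact_mod_cast hk4)) x v t).trans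
    (mul_le_mul_of_nonneg_right (P.norm_iteratedFDeriv_le_of_norm_sub_le hk hk4 ?_) (by positivity))
  rw [add_sub_cancel_left, norm_smul, norm_of_nonneg ht.1]
  exact (mul_le_of_le_one_left (norm_nonneg v) ht.2).trans hv

theorem norm_iteratedFDeriv_exp_le (P : TamePotential U C) (hθ : 0 ≤ θ) {k : ℕ} (hk : k ≤ 4)
    (hz : ‖z - x‖ ≤ 1 + C) :
    ‖iteratedFDeriv ℝ k (fun y => exp (θ * U y)) z‖ ≤
      k.factorial * exp (θ * U z) * ((1 + θ * localConst C) * U x) ^ k := by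
  have hD := P.localConst_nonneg
  have hx := P.one_le x
  have hcd (i : ℕ) (hi : i ≤ k) : ContDiff ℝ i U :=
    P.contDiff.of_le (by exact_mod_cast hi.trans hk)
  refine norm_iteratedFDeriv_exp_comp_le (contDiff_const.mul (hcd k le_rfl)) fun i hi hik => ?_
  have hsmul : iteratedFDeriv ℝ i (fun y => θ * U y) z = θ • iteratedFDeriv ℝ i U z :=
    iteratedFDeriv_const_smul_apply' (a := θ) (x := z) (hcd i hik).contDiffAt
  have hbase : 1 ≤ (1 + θ * localConst C) * U x :=
    one_le_mul_of_one_le_of_one_le (by linarith [mul_nonneg hθ hD]) hx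
  calc ‖iteratedFDeriv ℝ i (fun y => θ * U y) z‖
      ≤ θ * (localConst C * U x) := by
        rw [hsmul, norm_smul, norm_of_nonneg hθ]
        gcongr
        exact P.norm_iteratedFDeriv_le_of_norm_sub_le hi (hik.trans hk) hz
    _ ≤ (1 + θ * localConst C) * U x := by linarith
    _ ≤ ((1 + θ * localConst C) * U x) ^ i := le_self_pow₀ hbase (by omega)

end NormedSpace

section InnerProductSpace

variable {E : Type*} [NormedAddCommGroup E] [InnerProductSpace ℝ E] [CompleteSpace E]
  {U : E → ℝ} {C : ℝ} {x v z : E}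

theorem abs_norm_gradient_sq_sub_le (P : TamePotential U C) (hz : ‖z - x‖ ≤ 1 + C) :
    |‖gradient U z‖ ^ 2 - ‖gradient U x‖ ^ 2| ≤
      2 * (localConst C * U x) ^ 2 * ‖z - x‖ := by
  have hnorm (y : E) : ‖gradient U y‖ = ‖fderiv ℝ U y‖ := LinearIsometryEquiv.norm_map _ _
  have hsub : |‖fderiv ℝ U z‖ - ‖fderiv ℝ U x‖| ≤ localConst C * U x * ‖z - x‖ :=
    (abs_norm_sub_norm_le _ _).trans (P.norm_fderiv_sub_le hz)
  have hsum : ‖fderiv ℝ U z‖ + ‖fderiv ℝ U x‖ ≤ 2 * (localConst C * U x) := by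
    have hx : ‖x - x‖ ≤ 1 + C := by simpa using add_nonneg zero_le_one P.nonneg
    linarith [P.norm_fderiv_le_of_norm_sub_le hz, P.norm_fderiv_le_of_norm_sub_le hx]
  rw [hnorm, hnorm, sq_sub_sq, abs_mul, abs_of_nonneg (a := ‖_‖ + ‖_‖) (by positivity)]
  have := mul_le_mul hsum hsub (abs_nonneg _) ((by positivity : (0 : ℝ) ≤ _ + _).trans hsum)
  linarith

theorem norm_gradient_le (P : TamePotential U C) (x : E) : ‖gradient U x‖ ≤ C * U x :=
  (LinearIsometryEquiv.norm_map _ _).trans_le (P.norm_fderiv_le x)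

theorem abs_sub_sub_trapezoid_le (P : TamePotential U C) (hv : ‖v‖ ≤ 1 + C) :
    |U (x + v) - U x - inner ℝ v (gradient U x + gradient U (x + v)) / 2| ≤
      5 / 12 * (localConst C * U x * ‖v‖ ^ 3) := by
  have hline : ContDiff ℝ 3 fun t : ℝ => U (x + t • v) :=
    (P.contDiff.of_le (by norm_num)).comp (by fun_prop)
  have h := _root_.abs_sub_sub_trapezoid_le hline fun t ht =>
    P.abs_iteratedDeriv_comp_line_le (x := x) (by norm_num) (by norm_num) hv ht
  rw [inner_add_right, real_inner_comm, real_inner_comm _ v]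
  simpa only [iteratedDeriv_one_comp_line (P.contDiff.of_le (by norm_num)), zero_smul, one_smul,
    add_zero] using h

theorem le_add_inner_add (P : TamePotential U C) (hv : ‖v‖ ≤ 1 + C) :
    U (x + v) ≤ U x + inner ℝ (gradient U x) v + localConst C * U x * ‖v‖ ^ 2 / 2 := by
  have hline : ContDiff ℝ 2 fun t : ℝ => U (x + t • v) :=
    (P.contDiff.of_le (by norm_num)).comp (by fun_prop)
  have h := le_of_iteratedDeriv_two_le hline fun t ht => (le_abs_self _).trans
    (P.abs_iteratedDeriv_comp_line_le (x := x) (by norm_num) (by norm_num) hv ht)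
  simpa only [iteratedDeriv_one_comp_line (P.contDiff.of_le (by norm_num)), zero_smul, one_smul,
    add_zero] using h

end InnerProductSpace

open Laplacian in
theorem laplacian_le {E : Type*} [NormedAddCommGroup E] [InnerProductSpace ℝ E]
    [FiniteDimensional ℝ E] {U : E → ℝ} {C : ℝ} (P : TamePotential U C) (z : E) :
    Δ U z ≤ Module.finrank ℝ E * (C * U z) := by
  refine (laplacian_le_finrank_mul z).trans ?_
  gcongr
  exact P.norm_iteratedFDeriv_le 2 (by norm_num) (by norm_num) z

end TamePotential

section Metropolis

variable {n : ℕ} {β h θ : ℝ} {U : Euc n → ℝ} {C : ℝ}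

/-- The logarithm of the Metropolis ratio `q_h(y,x) exp(-βU(y)) / (q_h(x,y) exp(-βU(x)))`. -/
def logRatio (β h : ℝ) (U : Euc n → ℝ) (x y : Euc n) : ℝ :=
  -β * (U y - U x) - β / (4 * h) *
    (‖x - y + h • gradient U y‖ ^ 2 - ‖y - x + h • gradient U x‖ ^ 2)

theorem accept_eq_min_exp (hβ : 0 < β) (hh : 0 < h) (U : Euc n → ℝ) (x y : Euc n) :
    accept n β h U x y = min 1 (exp (logRatio β h U x y)) := by
  have hc : 0 < (4 * π * β⁻¹ * h) ^ (-(n : ℝ) / 2) := by positivity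
  rw [accept, eulerDensity, eulerDensity, mul_assoc (_ ^ _), mul_assoc (_ ^ _),
    mul_div_mul_left _ _ hc.ne', ← exp_add, ← exp_add, ← exp_sub, logRatio]
  congr 2
  field_simp
  ring

/-- The quadratic terms in the increment cancel, leaving the error of the trapezoidal rule for
`U` along the segment and a difference of squared gradients. -/
theorem logRatio_add (hh : h ≠ 0) (U : Euc n → ℝ) (x v : Euc n) :
    logRatio β h U x (x + v) =
      -β * (U (x + v) - U x - inner ℝ v (gradient U x + gradient U (x + v)) / 2) -
        β * h / 4 * (‖gradient U (x + v)‖ ^ 2 - ‖gradient U x‖ ^ 2) := by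
  have hback : x - (x + v) + h • gradient U (x + v) = h • gradient U (x + v) - v := by abel
  have hforth : x + v - x + h • gradient U x = h • gradient U x + v := by abel
  rw [logRatio, hback, hforth, norm_sub_sq_real, norm_add_sq_real, real_inner_smul_left,
    real_inner_smul_left, norm_smul, norm_smul, inner_add_right, real_inner_comm v,
    real_inner_comm v, mul_pow, mul_pow, norm_eq_abs, sq_abs]
  field_simp
  ring

theorem accept_nonneg (hβ : 0 < β) (hh : 0 < h) (U : Euc n → ℝ) (x y : Euc n) :
    0 ≤ accept n β h U x y := by
  rw [accept_eq_min_exp hβ hh]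
  positivity

theorem accept_le_one (β h : ℝ) (U : Euc n → ℝ) (x y : Euc n) : accept n β h U x y ≤ 1 :=
  min_le_left _ _

theorem abs_accept_sub_one_le (hβ : 0 < β) (hh : 0 < h) (U : Euc n → ℝ) (x y : Euc n) :
    |accept n β h U x y - 1| ≤ |logRatio β h U x y| := by
  rw [abs_sub_comm, abs_of_nonneg (sub_nonneg.2 (accept_le_one β h U x y)),
    accept_eq_min_exp hβ hh, ← max_sub_sub_left, sub_self]
  exact max_le (abs_nonneg _)
    (by linarith [add_one_le_exp (logRatio β h U x y), neg_abs_le (logRatio β h U x y)])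

theorem accept_mul_exp_le (hβ : 0 < β) (hh : 0 < h) (hθ : 0 ≤ θ) (hθβ : θ ≤ β) (U : Euc n → ℝ)
    (x y : Euc n) :
    accept n β h U x y * exp (θ * U y) ≤
      exp (θ * U x) * exp (θ / (4 * h) * ‖y - x + h • gradient U x‖ ^ 2) := by
  have hfrac : θ / β ≤ 1 := (div_le_one hβ).2 hθβ
  have hfrac0 : 0 ≤ θ / β := by positivity
  have hpow : accept n β h U x y ≤ exp (θ / β * logRatio β h U x y) := by
    rw [accept_eq_min_exp hβ hh]
    rcases le_total 0 (logRatio β h U x y) with hR | hR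
    · exact (min_le_left _ _).trans (one_le_exp (mul_nonneg hfrac0 hR))
    · exact (min_le_right _ _).trans (exp_le_exp.2 (by nlinarith))
  have hback : 0 ≤ β / (4 * h) * ‖x - y + h • gradient U y‖ ^ 2 := by positivity
  calc accept n β h U x y * exp (θ * U y)
      ≤ exp (θ / β * logRatio β h U x y) * exp (θ * U y) := by gcongr
    _ ≤ exp (θ / β * (-β * (U y - U x) + β / (4 * h) * ‖y - x + h • gradient U x‖ ^ 2)) *
        exp (θ * U y) := by
      gcongr
      rw [logRatio]
      linarith
    _ = exp (θ * U x) * exp (θ / (4 * h) * ‖y - x + h • gradient U x‖ ^ 2) := by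
      rw [← exp_add, ← exp_add]
      congr 1
      field_simp
      ring

theorem continuous_accept (hβ : 0 < β) (hh : 0 < h) (hU : ContDiff ℝ 1 U) (x : Euc n) :
    Continuous (accept n β h U x) := by
  have hgrad : Continuous (gradient U) :=
    (InnerProductSpace.toDual ℝ (Euc n)).symm.continuous.comp (hU.continuous_fderiv one_ne_zero)
  have hcont := hU.continuous
  simp_rw [funext (accept_eq_min_exp hβ hh U x), logRatio]
  fun_prop

theorem TamePotential.abs_logRatio_le (P : TamePotential U C) (hβ : 0 ≤ β) {s ρ : ℝ} (hs : 0 < s)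
    (hρ : 1 ≤ ρ) {x z : Euc n} (hz : ‖z - x‖ ≤ 1 + C) (hzρ : ‖z - x‖ ≤ s * ρ) :
    |logRatio β (s ^ 2) U x z| ≤
      β * (localConst C + localConst C ^ 2) * (s * U x * ρ) ^ 3 := by
  have hD := P.localConst_nonneg
  have hu := P.one_le x
  have htrap := P.abs_sub_sub_trapezoid_le (x := x) hz
  have hgrad := P.abs_norm_gradient_sq_sub_le hz
  obtain ⟨v, rfl⟩ : ∃ v, z = x + v := ⟨z - x, by abel⟩
  rw [add_sub_cancel_left] at *
  have htrap' : localConst C * U x * ‖v‖ ^ 3 ≤ localConst C * (s * U x * ρ) ^ 3 := by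
    calc localConst C * U x * ‖v‖ ^ 3 ≤ localConst C * U x ^ 3 * (s * ρ) ^ 3 := by
          gcongr; exact le_self_pow₀ hu (by norm_num)
      _ = localConst C * (s * U x * ρ) ^ 3 := by ring
  have hgrad' : s ^ 2 * ((localConst C * U x) ^ 2 * ‖v‖) ≤
      localConst C ^ 2 * (s * U x * ρ) ^ 3 := by
    calc s ^ 2 * ((localConst C * U x) ^ 2 * ‖v‖)
        ≤ s ^ 2 * ((localConst C * U x) ^ 2 * (s * ρ)) := by gcongr
      _ = localConst C ^ 2 * s ^ 3 * (U x ^ 2 * ρ ^ 1) := by ring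
      _ ≤ localConst C ^ 2 * s ^ 3 * (U x ^ 3 * ρ ^ 3) := by gcongr <;> norm_num
      _ = localConst C ^ 2 * (s * U x * ρ) ^ 3 := by ring
  rw [logRatio_add (by positivity)]
  have hβs : 0 ≤ β * s ^ 2 / 4 := by positivity
  refine (abs_sub _ _).trans ?_
  rw [abs_mul, abs_mul, abs_neg, abs_of_nonneg hβ, abs_of_nonneg hβs]
  have hD3 : 0 ≤ localConst C * (s * U x * ρ) ^ 3 := by positivity
  have hD3' : 0 ≤ localConst C ^ 2 * (s * U x * ρ) ^ 3 := by positivity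
  nlinarith [mul_le_mul_of_nonneg_left htrap hβ, mul_le_mul_of_nonneg_left hgrad hβs,
    mul_le_mul_of_nonneg_left htrap' hβ, mul_le_mul_of_nonneg_left hgrad' hβ,
    mul_nonneg hβ hD3, mul_nonneg hβ hD3']

end Metropolis

section Proposal

variable {n : ℕ}

/-- The forward Euler proposal of stepsize `s ^ 2` started at `x`, as a function of the noise `ξ`;
its mean is `eulerStep s U x 0`. -/
def eulerStep (s : ℝ) (U : Euc n → ℝ) (x ξ : Euc n) : Euc n :=
  x - s ^ 2 • gradient U x + s • ξ

variable {β s θ C : ℝ} {U : Euc n → ℝ} {x ξ : Euc n}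

theorem eulerStep_zero_add (s : ℝ) (U : Euc n → ℝ) (x ξ : Euc n) :
    eulerStep s U x 0 + s • ξ = eulerStep s U x ξ := by
  simp [eulerStep]

theorem eulerDensity_eulerStep (hβ : 0 < β) (hs : 0 < s) (U : Euc n → ℝ) (x ξ : Euc n) :
    eulerDensity n β (s ^ 2) U x (eulerStep s U x ξ) =
      (s ^ n)⁻¹ * ((π / (β / 4)) ^ (-(n : ℝ) / 2) * exp (-(β / 4) * ‖ξ‖ ^ 2)) := by
  have harg : eulerStep s U x ξ - x + s ^ 2 • gradient U x = s • ξ := by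
    rw [eulerStep]; abel
  have hpow : (s ^ 2) ^ (-(n : ℝ) / 2) = (s ^ n)⁻¹ := by
    rw [← rpow_natCast s 2, ← rpow_mul hs.le, Nat.cast_ofNat, mul_div_cancel₀ _ two_ne_zero,
      rpow_neg hs.le, rpow_natCast]
  rw [eulerDensity, harg, norm_smul, norm_of_nonneg hs.le, mul_rpow (by positivity) (by positivity),
    hpow]
  field_simp

theorem integral_mul_eulerDensity (hβ : 0 < β) (hs : 0 < s) (U : Euc n → ℝ) (x : Euc n)
    (f : Euc n → ℝ) :
    ∫ y, f y * eulerDensity n β (s ^ 2) U x y =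
      ∫ ξ, f (eulerStep s U x ξ) ∂isotropicGaussian (Euc n) (β / 4) := by
  have hscale := Measure.integral_comp_smul (volume : Measure (Euc n))
    (fun w => f (eulerStep s U x 0 + w) * eulerDensity n β (s ^ 2) U x (eulerStep s U x 0 + w)) s
  rw [integral_add_left_eq_self fun y => f y * eulerDensity n β (s ^ 2) U x y] at hscale
  simp_rw [eulerStep_zero_add, eulerDensity_eulerStep hβ hs, finrank_euclideanSpace_fin,
    mul_left_comm (f _), integral_const_mul, smul_eq_mul, abs_of_pos (inv_pos.2 (pow_pos hs n))]
    at hscale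
  rw [isotropicGaussian.integral_eq (by positivity), finrank_euclideanSpace_fin]
  exact (mul_left_cancel₀ (by positivity) hscale).symm

theorem integrable_mul_eulerDensity_iff (hβ : 0 < β) (hs : 0 < s) {f : Euc n → ℝ} :
    Integrable (fun y => f y * eulerDensity n β (s ^ 2) U x y) ↔
      Integrable (fun ξ => f (eulerStep s U x ξ)) (isotropicGaussian (Euc n) (β / 4)) := by
  let g := fun y => f y * eulerDensity n β (s ^ 2) U x y
  have hscale : (fun ξ => g (eulerStep s U x 0 + s • ξ)) = fun ξ =>
      (s ^ n)⁻¹ * (π / (β / 4)) ^ (-(n : ℝ) / 2) *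
        (f (eulerStep s U x ξ) * exp (-(β / 4) * ‖ξ‖ ^ 2)) := by
    ext ξ
    simp only [g, eulerStep_zero_add, eulerDensity_eulerStep hβ hs]
    ring
  have hconst : IsUnit ((s ^ n)⁻¹ * (π / (β / 4)) ^ (-(n : ℝ) / 2)) :=
    IsUnit.mk0 _ (by positivity)
  rw [isotropicGaussian.integrable_iff (by positivity), ← integrable_const_mul_iff hconst
      (fun ξ => f (eulerStep s U x ξ) * exp (-(β / 4) * ‖ξ‖ ^ 2)), ← hscale,
    integrable_comp_smul_iff volume (fun w => g (eulerStep s U x 0 + w)) hs.ne']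
  exact ((measurePreserving_add_left volume (eulerStep s U x 0)).integrable_comp_emb
    (measurableEmbedding_addLeft _)).symm

end Proposal

section Increment

theorem exp_sub_one_le_mul_exp (t : ℝ) : exp t - 1 ≤ t * exp t := by
  have h := mul_le_mul_of_nonneg_right (one_sub_le_exp_neg t) (exp_pos t).le
  rw [← exp_add, neg_add_cancel, exp_zero] at h
  linarith

theorem abs_exp_sub_one_le_mul_exp (t : ℝ) : |exp t - 1| ≤ |t| * exp |t| := by
  rcases le_total 0 t with ht | ht
  · rw [abs_of_nonneg ht, abs_of_nonneg (sub_nonneg.2 (one_le_exp ht))]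
    exact exp_sub_one_le_mul_exp t
  · rw [abs_of_nonpos ht, abs_of_nonpos (sub_nonpos.2 (exp_le_one_iff.2 ht))]
    have h := le_mul_of_one_le_right (neg_nonneg.2 ht) (one_le_exp (neg_nonneg.2 ht))
    linarith [add_one_le_exp t]

variable {n : ℕ} {β s θ ρ C : ℝ} {U : Euc n → ℝ} {x z ξ : Euc n}

/-- The change of `exp (θ * U)` under one Metropolis step of size `s ^ 2` started at `x` whose
proposal has noise `ξ`, averaged over the accept/reject decision. -/
def meanIncrement (β s θ : ℝ) (U : Euc n → ℝ) (x ξ : Euc n) : ℝ :=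
  accept n β (s ^ 2) U x (eulerStep s U x ξ) *
    (exp (θ * U (eulerStep s U x ξ)) - exp (θ * U x))

/-- The growth in the noise `ξ` of the fourth-order remainder of the mean increment; the quadratic
exponent comes from the noise levels at which Taylor expansion is not available. -/
def noiseWeight (θ C : ℝ) (ξ : Euc n) : ℝ :=
  (1 + C + ‖ξ‖) ^ 4 * exp (θ * localConst C * (1 + C + ‖ξ‖) + θ / 4 * ‖ξ‖ ^ 2)

/-- The constant in front of the fourth-order remainder of the mean increment. -/
def incrementConst (β θ C : ℝ) : ℝ :=
  4 + 2 * (1 + θ * localConst C) ^ 2 + 2 * (1 + θ * localConst C) ^ 4 +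
    2 * (β * (localConst C + localConst C ^ 2) * (θ * localConst C))

theorem incrementConst_nonneg (hβ : 0 ≤ β) (hθ : 0 ≤ θ) (hC : 0 ≤ localConst C) :
    0 ≤ incrementConst β θ C := by
  unfold incrementConst
  positivity

theorem pow_mul_exp_le_noiseWeight (hθ : 0 ≤ θ) (ξ : Euc n) :
    (1 + C + ‖ξ‖) ^ 4 * exp (θ * localConst C * (1 + C + ‖ξ‖)) ≤ noiseWeight θ C ξ := by
  unfold noiseWeight
  gcongr
  exact le_add_of_nonneg_right (by positivity)

theorem pow_mul_exp_norm_sq_le_noiseWeight (hθ : 0 ≤ θ) (hC : 0 ≤ C) (ξ : Euc n) :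
    (1 + C + ‖ξ‖) ^ 4 * exp (θ / 4 * ‖ξ‖ ^ 2) ≤ noiseWeight θ C ξ := by
  have hD : 0 ≤ localConst C := mul_nonneg hC (exp_pos _).le
  unfold noiseWeight
  gcongr
  exact le_add_of_nonneg_left (by positivity)

theorem accept_mul_exp_eulerStep_le (hβ : 0 < β) (hθ : 0 ≤ θ) (hθβ : θ ≤ β) (hs : 0 < s)
    (U : Euc n → ℝ) (x ξ : Euc n) :
    accept n β (s ^ 2) U x (eulerStep s U x ξ) * exp (θ * U (eulerStep s U x ξ)) ≤
      exp (θ * U x) * exp (θ / 4 * ‖ξ‖ ^ 2) := by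
  have hnoise : eulerStep s U x ξ - x + s ^ 2 • gradient U x = s • ξ := by rw [eulerStep]; abel
  have h := accept_mul_exp_le hβ (pow_pos hs 2) hθ hθβ U x (eulerStep s U x ξ)
  have hexp : θ / (4 * s ^ 2) * (s * ‖ξ‖) ^ 2 = θ / 4 * ‖ξ‖ ^ 2 := by field_simp
  rwa [hnoise, norm_smul, norm_of_nonneg hs.le, hexp] at h

theorem meanIncrement_le (hβ : 0 < β) (hθ : 0 ≤ θ) (hθβ : θ ≤ β) (hs : 0 < s)
    (U : Euc n → ℝ) (x ξ : Euc n) :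
    meanIncrement β s θ U x ξ ≤ exp (θ * U x) * exp (θ / 4 * ‖ξ‖ ^ 2) := by
  have hreturn : 0 ≤ accept n β (s ^ 2) U x (eulerStep s U x ξ) * exp (θ * U x) :=
    mul_nonneg (accept_nonneg hβ (pow_pos hs 2) U _ _) (exp_pos _).le
  rw [meanIncrement, mul_sub]
  linarith [accept_mul_exp_eulerStep_le hβ hθ hθβ hs U x ξ]

namespace TamePotential

theorem le_one_of_mul_le_one (P : TamePotential U C) (hs : 0 ≤ s) (hsU : s * U x ≤ 1) : s ≤ 1 :=
  (le_mul_of_one_le_right hs (P.one_le x)).trans hsU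

theorem norm_eulerStep_sub_le (P : TamePotential U C) (hs : 0 ≤ s) (hsU : s * U x ≤ 1)
    (ξ : Euc n) : ‖eulerStep s U x ξ - x‖ ≤ s * (C + ‖ξ‖) := by
  have hC := P.nonneg
  calc ‖eulerStep s U x ξ - x‖ = ‖s • ξ - s ^ 2 • gradient U x‖ := by rw [eulerStep]; congr 1; abel
    _ ≤ s * ‖ξ‖ + s ^ 2 * ‖gradient U x‖ := by
      refine (norm_sub_le _ _).trans_eq ?_
      rw [norm_smul, norm_smul, norm_of_nonneg hs, norm_of_nonneg (sq_nonneg s)]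
    _ ≤ s * ‖ξ‖ + s ^ 2 * (C * U x) := by gcongr; exact P.norm_gradient_le x
    _ = s * ‖ξ‖ + s * C * (s * U x) := by ring
    _ ≤ s * ‖ξ‖ + s * C * 1 := by gcongr
    _ = s * (C + ‖ξ‖) := by ring

theorem norm_eulerStep_sub_le_one_add (P : TamePotential U C) (hs : 0 ≤ s) (hsU : s * U x ≤ 1)
    (hξ : s * ‖ξ‖ ≤ 1) : ‖eulerStep s U x ξ - x‖ ≤ 1 + C := by
  have hs1 := mul_le_of_le_one_left P.nonneg (P.le_one_of_mul_le_one hs hsU)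
  linarith [P.norm_eulerStep_sub_le hs hsU ξ]

theorem mul_abs_sub_le (P : TamePotential U C) (hθ : 0 ≤ θ) (hz : ‖z - x‖ ≤ 1 + C)
    (hzρ : ‖z - x‖ ≤ s * ρ) :
    |θ * U z - θ * U x| ≤ θ * localConst C * (s * U x * ρ) := by
  have hD := P.localConst_nonneg
  have hx := P.pos x
  rw [← mul_sub, abs_mul, abs_of_nonneg hθ]
  calc θ * |U z - U x| ≤ θ * (localConst C * U x * (s * ρ)) := by
        gcongr
        exact (P.abs_sub_le hz).trans (by gcongr)
    _ = θ * localConst C * (s * U x * ρ) := by ring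

theorem exp_le_exp_mul_exp (P : TamePotential U C) (hθ : 0 ≤ θ) (hρ : 0 ≤ ρ) (hsU : s * U x ≤ 1)
    (hz : ‖z - x‖ ≤ 1 + C) (hzρ : ‖z - x‖ ≤ s * ρ) :
    exp (θ * U z) ≤ exp (θ * U x) * exp (θ * localConst C * ρ) := by
  have hD := P.localConst_nonneg
  rw [← exp_add, exp_le_exp, ← sub_le_iff_le_add']
  calc θ * U z - θ * U x ≤ θ * localConst C * (s * U x * ρ) :=
        (le_abs_self _).trans (P.mul_abs_sub_le hθ hz hzρ)
    _ ≤ θ * localConst C * ρ := by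
        gcongr
        exact mul_le_of_le_one_left hρ hsU

theorem abs_exp_sub_exp_le (P : TamePotential U C) (hθ : 0 ≤ θ) (hρ : 0 ≤ ρ) (hsU : s * U x ≤ 1)
    (hz : ‖z - x‖ ≤ 1 + C) (hzρ : ‖z - x‖ ≤ s * ρ) :
    |exp (θ * U z) - exp (θ * U x)| ≤
      θ * localConst C * (s * U x * ρ) * (exp (θ * U x) * exp (θ * localConst C * ρ)) := by
  have hD := P.localConst_nonneg
  have hδ := P.mul_abs_sub_le hθ hz hzρ
  have hfactor : exp (θ * U z) - exp (θ * U x) =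
      exp (θ * U x) * (exp (θ * U z - θ * U x) - 1) := by
    rw [mul_sub, ← exp_add, add_sub_cancel, mul_one]
  rw [hfactor, abs_mul, abs_of_pos (exp_pos _), mul_left_comm]
  gcongr
  refine (abs_exp_sub_one_le_mul_exp _).trans ?_
  gcongr
  · exact (abs_nonneg _).trans hδ
  · exact hδ.trans (mul_le_mul_of_nonneg_left (mul_le_of_le_one_left hρ hsU) (by positivity))

theorem meanIncrement_le_of_mul_norm_le_one (P : TamePotential U C) (hβ : 0 < β) (hθ : 0 ≤ θ)
    (hs : 0 < s) (hsU : s * U x ≤ 1) (hξ : s * ‖ξ‖ ≤ 1) :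
    meanIncrement β s θ U x ξ ≤
      exp (θ * U (eulerStep s U x ξ)) - exp (θ * U x) +
        β * (localConst C + localConst C ^ 2) * (θ * localConst C) *
          (s * U x * (1 + C + ‖ξ‖)) ^ 4 *
            (exp (θ * U x) * exp (θ * localConst C * (1 + C + ‖ξ‖))) := by
  set ρ := 1 + C + ‖ξ‖
  set z := eulerStep s U x ξ
  have hC := P.nonneg
  have hD := P.localConst_nonneg
  have hx := P.pos x
  have hρ1 : 1 ≤ ρ := by linarith [norm_nonneg ξ]
  have hz : ‖z - x‖ ≤ 1 + C := P.norm_eulerStep_sub_le_one_add hs.le hsU hξ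
  have hzρ : ‖z - x‖ ≤ s * ρ :=
    (P.norm_eulerStep_sub_le hs.le hsU ξ).trans (by gcongr; linarith)
  have hreject : |accept n β (s ^ 2) U x z - 1| ≤
      β * (localConst C + localConst C ^ 2) * (s * U x * ρ) ^ 3 :=
    (abs_accept_sub_one_le hβ (by positivity) U x z).trans (P.abs_logRatio_le hβ.le hs hρ1 hz hzρ)
  have hjump := P.abs_exp_sub_exp_le hθ (by linarith) hsU hz hzρ
  calc meanIncrement β s θ U x ξ
      = exp (θ * U z) - exp (θ * U x) +
          (accept n β (s ^ 2) U x z - 1) * (exp (θ * U z) - exp (θ * U x)) := by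
        rw [meanIncrement]; ring
    _ ≤ exp (θ * U z) - exp (θ * U x) +
          |accept n β (s ^ 2) U x z - 1| * |exp (θ * U z) - exp (θ * U x)| := by
        rw [← abs_mul]; gcongr; exact le_abs_self _
    _ ≤ exp (θ * U z) - exp (θ * U x) + β * (localConst C + localConst C ^ 2) *
          (s * U x * ρ) ^ 3 * (θ * localConst C * (s * U x * ρ) *
            (exp (θ * U x) * exp (θ * localConst C * ρ))) := by gcongr
    _ = _ := by ring

theorem norm_iteratedFDeriv_four_exp_eulerStep_le (P : TamePotential U C) (hθ : 0 ≤ θ)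
    (hs : 0 ≤ s) (hsU : s * U x ≤ 1) (hξ : s * ‖ξ‖ ≤ 1) :
    ‖iteratedFDeriv ℝ 4 (fun z => exp (θ * U z)) (eulerStep s U x ξ)‖ ≤
      24 * (exp (θ * U x) * exp (θ * localConst C * (1 + C + ‖ξ‖))) *
        ((1 + θ * localConst C) * U x) ^ 4 := by
  have hC := P.nonneg
  have hD := P.localConst_nonneg
  have hx := P.pos x
  have hz := P.norm_eulerStep_sub_le_one_add hs hsU hξ
  have hzρ : ‖eulerStep s U x ξ - x‖ ≤ s * (1 + C + ‖ξ‖) :=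
    (P.norm_eulerStep_sub_le hs hsU ξ).trans (by gcongr; linarith)
  refine (P.norm_iteratedFDeriv_exp_le hθ le_rfl hz).trans ?_
  gcongr
  · norm_num
  · exact P.exp_le_exp_mul_exp hθ (by positivity) hsU hz hzρ

theorem exp_eulerStep_add_exp_eulerStep_neg_le (P : TamePotential U C) (hθ : 0 ≤ θ) (hs : 0 ≤ s)
    (hsU : s * U x ≤ 1) (hξ : s * ‖ξ‖ ≤ 1) :
    exp (θ * U (eulerStep s U x ξ)) + exp (θ * U (eulerStep s U x (-ξ))) ≤
      2 * exp (θ * U (eulerStep s U x 0)) +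
        s ^ 2 * iteratedFDeriv ℝ 2 (fun z => exp (θ * U z)) (eulerStep s U x 0) ![ξ, ξ] +
        2 * (1 + θ * localConst C) ^ 4 * (s * U x * (1 + C + ‖ξ‖)) ^ 4 *
          (exp (θ * U x) * exp (θ * localConst C * (1 + C + ‖ξ‖))) := by
  set ρ := 1 + C + ‖ξ‖
  set m := eulerStep s U x 0
  have hC := P.nonneg
  have hD := P.localConst_nonneg
  have hx := P.pos x
  have hfourth (t : ℝ) (ht : t ∈ Set.Icc (-1 : ℝ) 1) :
      ‖iteratedFDeriv ℝ 4 (fun z => exp (θ * U z)) (m + t • (s • ξ))‖ ≤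
        24 * (exp (θ * U x) * exp (θ * localConst C * ρ)) *
          ((1 + θ * localConst C) * U x) ^ 4 := by
    have htξ : ‖t • ξ‖ ≤ ‖ξ‖ := by
      rw [norm_smul]
      exact mul_le_of_le_one_left (norm_nonneg ξ) (abs_le.2 ht)
    rw [smul_comm, eulerStep_zero_add]
    refine (P.norm_iteratedFDeriv_four_exp_eulerStep_le hθ hs hsU
      ((mul_le_mul_of_nonneg_left htξ hs).trans hξ)).trans ?_
    gcongr
    exact add_le_add_right htξ _
  have htaylor := add_sub_le_of_norm_iteratedFDeriv_four_le
    (contDiff_const.mul P.contDiff).exp (z := m) (w := s • ξ) hfourth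
  have hneg : m - s • ξ = eulerStep s U x (-ξ) := by
    rw [← eulerStep_zero_add, smul_neg, sub_eq_add_neg]
  rw [hneg, eulerStep_zero_add, iteratedFDeriv_two_smul_smul, norm_smul, norm_of_nonneg hs]
    at htaylor
  refine htaylor.trans (add_le_add_right ?_ _)
  calc 24 * (exp (θ * U x) * exp (θ * localConst C * ρ)) * ((1 + θ * localConst C) * U x) ^ 4 *
        (s * ‖ξ‖) ^ 4 / 12
      = 2 * (1 + θ * localConst C) ^ 4 * (s * U x * ‖ξ‖) ^ 4 *
          (exp (θ * U x) * exp (θ * localConst C * ρ)) := by ring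
    _ ≤ 2 * (1 + θ * localConst C) ^ 4 * (s * U x * ρ) ^ 4 *
          (exp (θ * U x) * exp (θ * localConst C * ρ)) := by gcongr; linarith

theorem neg_sq_mul_iteratedFDeriv_two_exp_le (P : TamePotential U C) (hθ : 0 ≤ θ) (hs : 0 ≤ s)
    (hsU : s * U x ≤ 1) (hξ : 1 ≤ s * U x * (1 + C + ‖ξ‖)) :
    -(s ^ 2 * iteratedFDeriv ℝ 2 (fun z => exp (θ * U z)) (eulerStep s U x 0) ![ξ, ξ]) ≤
      2 * (1 + θ * localConst C) ^ 2 * (s * U x * (1 + C + ‖ξ‖)) ^ 4 *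
        (exp (θ * U x) * exp (θ * localConst C * (1 + C + ‖ξ‖))) := by
  set ρ := 1 + C + ‖ξ‖
  set m := eulerStep s U x 0
  have hC := P.nonneg
  have hD := P.localConst_nonneg
  have hx := P.pos x
  have hm : ‖m - x‖ ≤ 1 + C := P.norm_eulerStep_sub_le_one_add hs hsU (by simp)
  have hmρ : ‖m - x‖ ≤ s * ρ :=
    (P.norm_eulerStep_sub_le hs hsU 0).trans
      (by gcongr; rw [norm_zero]; linarith [norm_nonneg ξ])
  have hnorm : -iteratedFDeriv ℝ 2 (fun z => exp (θ * U z)) m ![ξ, ξ] ≤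
      ‖iteratedFDeriv ℝ 2 (fun z => exp (θ * U z)) m‖ * ‖ξ‖ ^ 2 :=
    (neg_le_abs _).trans <| by
      simpa [sq] using (iteratedFDeriv ℝ 2 (fun z => exp (θ * U z)) m).le_opNorm ![ξ, ξ]
  calc -(s ^ 2 * iteratedFDeriv ℝ 2 (fun z => exp (θ * U z)) m ![ξ, ξ])
      ≤ s ^ 2 * (2 * exp (θ * U m) * ((1 + θ * localConst C) * U x) ^ 2 * ‖ξ‖ ^ 2) := by
        rw [← mul_neg]
        gcongr
        refine hnorm.trans (mul_le_mul_of_nonneg_right ?_ (sq_nonneg _))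
        simpa using P.norm_iteratedFDeriv_exp_le hθ (k := 2) (by norm_num) hm
    _ = 2 * (1 + θ * localConst C) ^ 2 * (s * U x * ‖ξ‖) ^ 2 * exp (θ * U m) := by ring
    _ ≤ 2 * (1 + θ * localConst C) ^ 2 * (s * U x * ρ) ^ 4 *
        (exp (θ * U x) * exp (θ * localConst C * ρ)) := by
      gcongr
      · calc (s * U x * ‖ξ‖) ^ 2 ≤ (s * U x * ρ) ^ 2 := by gcongr; linarith
          _ ≤ (s * U x * ρ) ^ 4 := pow_le_pow_right₀ hξ (by norm_num)
      · exact P.exp_le_exp_mul_exp hθ (by positivity) hsU hm hmρ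

theorem meanIncrement_add_neg_le_of_mul_norm_le_one (P : TamePotential U C) (hβ : 0 < β)
    (hθ : 0 ≤ θ) (hs : 0 < s) (hsU : s * U x ≤ 1) (hξ : s * ‖ξ‖ ≤ 1) :
    meanIncrement β s θ U x ξ + meanIncrement β s θ U x (-ξ) ≤
      2 * (exp (θ * U (eulerStep s U x 0)) - exp (θ * U x)) +
        s ^ 2 * iteratedFDeriv ℝ 2 (fun z => exp (θ * U z)) (eulerStep s U x 0) ![ξ, ξ] +
        incrementConst β θ C * ((s * U x) ^ 4 * (exp (θ * U x) * noiseWeight θ C ξ)) := by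
  set κ := θ * localConst C with hκ
  set ρ := 1 + C + ‖ξ‖ with hρ
  have hD := P.localConst_nonneg
  have hplus := P.meanIncrement_le_of_mul_norm_le_one hβ hθ hs hsU hξ
  have hminus := P.meanIncrement_le_of_mul_norm_le_one (ξ := -ξ) hβ hθ hs hsU (by rwa [norm_neg])
  have htaylor := P.exp_eulerStep_add_exp_eulerStep_neg_le hθ hs.le hsU hξ
  rw [norm_neg, ← hκ, ← hρ] at hminus
  rw [← hκ, ← hρ] at hplus htaylor
  have hconst : 2 * (β * (localConst C + localConst C ^ 2) * κ) + 2 * (1 + κ) ^ 4 ≤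
      incrementConst β θ C := by
    rw [incrementConst, ← hκ]
    nlinarith [sq_nonneg (1 + κ)]
  have hremainder : (2 * (β * (localConst C + localConst C ^ 2) * κ) + 2 * (1 + κ) ^ 4) *
      ((s * U x * ρ) ^ 4 * (exp (θ * U x) * exp (κ * ρ))) ≤
        incrementConst β θ C * ((s * U x) ^ 4 * (exp (θ * U x) * noiseWeight θ C ξ)) :=
    calc _ ≤ incrementConst β θ C * ((s * U x * ρ) ^ 4 * (exp (θ * U x) * exp (κ * ρ))) := by gcongr
      _ = incrementConst β θ C * ((s * U x) ^ 4 * (exp (θ * U x) * (ρ ^ 4 * exp (κ * ρ)))) := by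
        ring
      _ ≤ _ := by
        have := incrementConst_nonneg hβ.le hθ hD
        gcongr
        exact pow_mul_exp_le_noiseWeight hθ ξ
  linarith

theorem meanIncrement_add_neg_le_of_one_le_mul_norm (P : TamePotential U C) (hβ : 0 < β)
    (hθ : 0 ≤ θ) (hθβ : θ ≤ β) (hs : 0 < s) (hsU : s * U x ≤ 1) (hξ : 1 ≤ s * ‖ξ‖) :
    meanIncrement β s θ U x ξ + meanIncrement β s θ U x (-ξ) ≤
      2 * (exp (θ * U (eulerStep s U x 0)) - exp (θ * U x)) +
        s ^ 2 * iteratedFDeriv ℝ 2 (fun z => exp (θ * U z)) (eulerStep s U x 0) ![ξ, ξ] +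
        incrementConst β θ C * ((s * U x) ^ 4 * (exp (θ * U x) * noiseWeight θ C ξ)) := by
  set ρ := 1 + C + ‖ξ‖
  set m := eulerStep s U x 0
  set X := (s * U x) ^ 4 * (exp (θ * U x) * noiseWeight θ C ξ)
  have hC := P.nonneg
  have hD := P.localConst_nonneg
  have hx := P.pos x
  have hξρ : s * ‖ξ‖ ≤ s * U x * ρ :=
    mul_le_mul (le_mul_of_one_le_right hs.le (P.one_le x)) (by linarith) (norm_nonneg ξ)
      (by positivity)
  have hρ : 1 ≤ s * U x * ρ := hξ.trans hξρ
  have hweight {w : ℝ} (hw : ρ ^ 4 * w ≤ noiseWeight θ C ξ) :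
      (s * U x * ρ) ^ 4 * (exp (θ * U x) * w) ≤ X :=
    calc (s * U x * ρ) ^ 4 * (exp (θ * U x) * w)
        = (s * U x) ^ 4 * (exp (θ * U x) * (ρ ^ 4 * w)) := by ring
      _ ≤ (s * U x) ^ 4 * (exp (θ * U x) * noiseWeight θ C ξ) := by gcongr
  have hbound : exp (θ * U x) * exp (θ / 4 * ‖ξ‖ ^ 2) ≤ X :=
    (le_mul_of_one_le_left (by positivity) (one_le_pow₀ hρ)).trans
      (hweight (pow_mul_exp_norm_sq_le_noiseWeight hθ hC ξ))
  have hplus := (meanIncrement_le hβ hθ hθβ hs U x ξ).trans hbound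
  have hminus := (meanIncrement_le hβ hθ hθβ hs U x (-ξ)).trans
    ((norm_neg ξ).symm ▸ hbound)
  have hx_le : exp (θ * U x) ≤ X :=
    (le_mul_of_one_le_right (exp_pos _).le (one_le_exp (by positivity))).trans hbound
  have hcurv := P.neg_sq_mul_iteratedFDeriv_two_exp_le hθ hs.le hsU hρ
  rw [mul_assoc _ (_ ^ 4)] at hcurv
  replace hcurv := hcurv.trans
    (mul_le_mul_of_nonneg_left (hweight (pow_mul_exp_le_noiseWeight hθ ξ)) (by positivity))
  have hconst : 4 + 2 * (1 + θ * localConst C) ^ 2 ≤ incrementConst β θ C := by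
    rw [incrementConst, add_assoc]
    exact le_add_of_nonneg_right (by positivity)
  have hX : (4 + 2 * (1 + θ * localConst C) ^ 2) * X ≤ incrementConst β θ C * X :=
    mul_le_mul_of_nonneg_right hconst ((exp_pos _).le.trans hx_le)
  linarith [exp_pos (θ * U m)]

theorem meanIncrement_add_neg_le (P : TamePotential U C) (hβ : 0 < β)
    (hθ : 0 ≤ θ) (hθβ : θ ≤ β) (hs : 0 < s) (hsU : s * U x ≤ 1) (ξ : Euc n) :
    meanIncrement β s θ U x ξ + meanIncrement β s θ U x (-ξ) ≤
      2 * (exp (θ * U (eulerStep s U x 0)) - exp (θ * U x)) +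
        s ^ 2 * iteratedFDeriv ℝ 2 (fun z => exp (θ * U z)) (eulerStep s U x 0) ![ξ, ξ] +
        incrementConst β θ C * ((s * U x) ^ 4 * (exp (θ * U x) * noiseWeight θ C ξ)) :=
  (le_total (s * ‖ξ‖) 1).elim
    (P.meanIncrement_add_neg_le_of_mul_norm_le_one hβ hθ hs hsU)
    (P.meanIncrement_add_neg_le_of_one_le_mul_norm hβ hθ hθβ hs hsU)

end TamePotential

theorem integrable_noiseWeight (hβ : 0 < β) (hθβ : θ < β) (hC : 0 ≤ C) :
    Integrable (noiseWeight θ C) (isotropicGaussian (Euc n) (β / 4)) :=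
  isotropicGaussian.integrable_pow_mul_exp (by linarith) (by positivity) (by positivity) 4

theorem continuous_eulerStep (s : ℝ) (U : Euc n → ℝ) (x : Euc n) :
    Continuous (eulerStep s U x) := by
  unfold eulerStep
  fun_prop

theorem integrable_meanIncrement (hβ : 0 < β) (hθ : 0 ≤ θ) (hθβ : θ < β) (hs : 0 < s)
    (hU : ContDiff ℝ 1 U) (x : Euc n) :
    Integrable (meanIncrement β s θ U x) (isotropicGaussian (Euc n) (β / 4)) := by
  have hprob := isotropicGaussian.isProbabilityMeasure (E := Euc n) (b := β / 4) (by positivity)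
  have hstep := continuous_eulerStep s U x
  have hcont : Continuous (meanIncrement β s θ U x) :=
    ((continuous_accept hβ (pow_pos hs 2) hU x).comp hstep).mul
      ((continuous_const.mul (hU.continuous.comp hstep)).rexp.sub continuous_const)
  have hdom := (isotropicGaussian.integrable_exp_mul_norm_sq (E := Euc n) (a := θ / 4)
    (b := β / 4) (by linarith) (by positivity)).const_mul (exp (θ * U x))
  refine (hdom.add (integrable_const (exp (θ * U x)))).mono' hcont.aestronglyMeasurable
    (.of_forall fun ξ => abs_le.2 ⟨?_, ?_⟩)
  · have hmove := mul_nonneg (accept_nonneg hβ (pow_pos hs 2) U x (eulerStep s U x ξ))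
      (exp_pos (θ * U (eulerStep s U x ξ))).le
    have hreturn := mul_le_mul_of_nonneg_right
      (accept_le_one β (s ^ 2) U x (eulerStep s U x ξ)) (exp_pos (θ * U x)).le
    rw [meanIncrement, mul_sub, Pi.add_apply]
    linarith [mul_pos (exp_pos (θ * U x)) (exp_pos (θ / 4 * ‖ξ‖ ^ 2))]
  · exact (meanIncrement_le hβ hθ hθβ.le hs U x ξ).trans
      (le_add_of_nonneg_right (exp_pos _).le)

open Laplacian in
theorem TamePotential.integral_meanIncrement_le (P : TamePotential U C) (hβ : 0 < β) (hθ : 0 ≤ θ)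
    (hθβ : θ < β) (hs : 0 < s) (hsU : s * U x ≤ 1) :
    ∫ ξ, meanIncrement β s θ U x ξ ∂isotropicGaussian (Euc n) (β / 4) ≤
      exp (θ * U (eulerStep s U x 0)) - exp (θ * U x) +
        s ^ 2 / β * Δ (fun z => exp (θ * U z)) (eulerStep s U x 0) +
        incrementConst β θ C / 2 * (∫ ξ, noiseWeight θ C ξ ∂isotropicGaussian (Euc n) (β / 4)) *
          ((s * U x) ^ 4 * exp (θ * U x)) := by
  have hb : 0 < β / 4 := by positivity
  have hprob := isotropicGaussian.isProbabilityMeasure (E := Euc n) hb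
  have hinc := integrable_meanIncrement hβ hθ hθβ hs (P.contDiff.of_le (by norm_num)) x
  have hinc_neg := isotropicGaussian.integrable_comp_neg hb hinc
  have hcurv := (isotropicGaussian.integrable_iteratedFDeriv_two hb
    (fun z => exp (θ * U z)) (eulerStep s U x 0)).const_mul (s ^ 2)
  have hrem := (((integrable_noiseWeight (n := n) hβ hθβ P.nonneg).const_mul
    (exp (θ * U x))).const_mul ((s * U x) ^ 4)).const_mul (incrementConst β θ C)
  have hmean := (integrable_const (μ := isotropicGaussian (Euc n) (β / 4))
    (2 * (exp (θ * U (eulerStep s U x 0)) - exp (θ * U x))))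
  have hmono := integral_mono (hinc.add hinc_neg) ((hmean.add hcurv).add hrem) fun ξ =>
    P.meanIncrement_add_neg_le hβ hθ hθβ.le hs hsU ξ
  rw [integral_add' hinc hinc_neg, isotropicGaussian.integral_comp_neg hb,
    integral_add' (hmean.add hcurv) hrem, integral_add' hmean hcurv, integral_const,
    integral_const_mul, integral_const_mul, integral_const_mul, integral_const_mul,
    isotropicGaussian.integral_iteratedFDeriv_two hb, probReal_univ, one_smul] at hmono
  linear_combination hmono / 2

end Increment

section Drift

open Laplacian

theorem exp_add_le_exp_add_mul_exp {a t t₀ : ℝ} (ha : a ≤ 0) (ht : 0 ≤ t) (htt₀ : t ≤ t₀) :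
    exp (a + t) ≤ exp a + t * exp t₀ := by
  have h : exp a * (exp t - 1) ≤ 1 * (t * exp t₀) := by
    gcongr
    · exact sub_nonneg.2 (one_le_exp ht)
    · exact exp_le_one_iff.2 ha
    · exact (exp_sub_one_le_mul_exp t).trans (by gcongr)
  rw [exp_add]
  linarith

theorem le_div_mul_one_sub_exp_neg {γ h : ℝ} (hγ : 0 < γ) (hh : 0 ≤ h) (hh1 : h ≤ 1) :
    h ≤ (1 + γ) / γ * (1 - exp (-γ * h)) := by
  have hexp : exp (-γ * h) ≤ (1 + γ * h)⁻¹ := by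
    rw [neg_mul, exp_neg]
    gcongr
    linarith [add_one_le_exp (γ * h)]
  calc h = (1 + γ) / γ * (γ * h / (1 + γ)) := by field_simp
    _ ≤ (1 + γ) / γ * (γ * h / (1 + γ * h)) := by gcongr; exact mul_le_of_le_one_right hγ.le hh1
    _ = (1 + γ) / γ * (1 - (1 + γ * h)⁻¹) := by field_simp; ring
    _ ≤ (1 + γ) / γ * (1 - exp (-γ * h)) := by gcongr

variable {n : ℕ} {β s θ C c d k E : ℝ} {U : Euc n → ℝ} {x : Euc n}

theorem lapl_eq_laplacian (U : Euc n → ℝ) (x : Euc n) : lapl U x = Δ U x := by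
  rw [InnerProductSpace.laplacian_eq_iteratedFDeriv_orthonormalBasis U
    (EuclideanSpace.basisFun (Fin n) ℝ)]
  simp [lapl, D2]

/-- The constant in front of the fourth-order error made on replacing the potential and its squared
gradient at the mean of the Euler proposal by their expansions at the current point. -/
def taylorConst (θ C : ℝ) : ℝ :=
  θ * (localConst C * C ^ 2 / 2 + 2 * localConst C ^ 2 * C)

namespace TamePotential

theorem taylorConst_nonneg (P : TamePotential U C) (hθ : 0 ≤ θ) : 0 ≤ taylorConst θ C := by
  have hC := P.nonneg
  have hD := P.localConst_nonneg
  unfold taylorConst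
  positivity

theorem eulerStep_zero_sub_le (P : TamePotential U C) (hs : 0 ≤ s) (hsU : s * U x ≤ 1) :
    U (eulerStep s U x 0) - U x ≤
      -(s ^ 2 * ‖gradient U x‖ ^ 2) + localConst C * C ^ 2 / 2 * (s * U x) ^ 4 := by
  have hD := P.localConst_nonneg
  have hu := P.one_le x
  have hmean : eulerStep s U x 0 = x + -(s ^ 2 • gradient U x) := by rw [eulerStep]; module
  have hstep : ‖-(s ^ 2 • gradient U x)‖ ≤ 1 + C := by
    simpa [hmean] using P.norm_eulerStep_sub_le_one_add (ξ := 0) hs hsU (by simp)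
  have htaylor := P.le_add_inner_add (x := x) hstep
  rw [inner_neg_right, inner_smul_right, real_inner_self_eq_norm_sq, norm_neg, norm_smul,
    norm_of_nonneg (sq_nonneg s)] at htaylor
  have hremainder : localConst C * U x * (s ^ 2 * ‖gradient U x‖) ^ 2 / 2 ≤
      localConst C * C ^ 2 / 2 * (s * U x) ^ 4 :=
    calc localConst C * U x * (s ^ 2 * ‖gradient U x‖) ^ 2 / 2
        ≤ localConst C * U x * (s ^ 2 * (C * U x)) ^ 2 / 2 := by
          gcongr; exact P.norm_gradient_le x
      _ = localConst C * C ^ 2 / 2 * s ^ 4 * U x ^ 3 := by ring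
      _ ≤ localConst C * C ^ 2 / 2 * s ^ 4 * U x ^ 4 := by gcongr; norm_num
      _ = localConst C * C ^ 2 / 2 * (s * U x) ^ 4 := by ring
  rw [hmean]
  linarith

theorem sq_mul_norm_gradient_eulerStep_zero_sq_le (P : TamePotential U C) (hs : 0 ≤ s)
    (hsU : s * U x ≤ 1) :
    s ^ 2 * ‖gradient U (eulerStep s U x 0)‖ ^ 2 ≤
      s ^ 2 * ‖gradient U x‖ ^ 2 + 2 * localConst C ^ 2 * C * (s * U x) ^ 4 := by
  have hC := P.nonneg
  have hu := P.one_le x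
  have hmean : ‖eulerStep s U x 0 - x‖ ≤ s ^ 2 * (C * U x) := by
    have hsub : eulerStep s U x 0 - x = -(s ^ 2 • gradient U x) := by rw [eulerStep]; module
    rw [hsub, norm_neg, norm_smul, norm_of_nonneg (sq_nonneg s)]
    gcongr
    exact P.norm_gradient_le x
  have hdiff := (le_abs_self _).trans (P.abs_norm_gradient_sq_sub_le
    (P.norm_eulerStep_sub_le_one_add (ξ := 0) hs hsU (by simp)))
  calc s ^ 2 * ‖gradient U (eulerStep s U x 0)‖ ^ 2
      ≤ s ^ 2 * (‖gradient U x‖ ^ 2 + 2 * (localConst C * U x) ^ 2 * (s ^ 2 * (C * U x))) := by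
        gcongr
        refine (sub_le_iff_le_add'.1 hdiff).trans ?_
        gcongr
    _ = s ^ 2 * ‖gradient U x‖ ^ 2 + 2 * localConst C ^ 2 * C * s ^ 4 * U x ^ 3 := by ring
    _ ≤ s ^ 2 * ‖gradient U x‖ ^ 2 + 2 * localConst C ^ 2 * C * s ^ 4 * U x ^ 4 := by
      gcongr; norm_num
    _ = _ := by ring

theorem exponent_le (P : TamePotential U C) (hβ : 0 < β) (hθ : 0 ≤ θ) (hcθ : c + θ ≤ β)
    (hs : 0 ≤ s) (hsU : s * U x ≤ 1)
    (hlap : Δ U (eulerStep s U x 0) ≤ c * ‖gradient U (eulerStep s U x 0)‖ ^ 2 - d + k) :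
    θ * (U (eulerStep s U x 0) - U x) + s ^ 2 / β * (θ * Δ U (eulerStep s U x 0) +
        θ ^ 2 * ‖gradient U (eulerStep s U x 0)‖ ^ 2) ≤
      -(θ * d / β) * s ^ 2 +
        (taylorConst θ C * (s * U x) ^ 4 + θ * k / β * s ^ 2) := by
  have hdescent := mul_le_mul_of_nonneg_left (P.eulerStep_zero_sub_le hs hsU) hθ
  have hgrad := P.sq_mul_norm_gradient_eulerStep_zero_sq_le hs hsU
  set G := ‖gradient U (eulerStep s U x 0)‖
  have hfrac : (c + θ) / β * (s ^ 2 * G ^ 2) ≤ s ^ 2 * G ^ 2 :=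
    mul_le_of_le_one_left (by positivity) ((div_le_one hβ).2 hcθ)
  have hdrift : s ^ 2 / β * (θ * Δ U (eulerStep s U x 0) + θ ^ 2 * G ^ 2) ≤
      θ * ((c + θ) / β * (s ^ 2 * G ^ 2)) - θ * d / β * s ^ 2 + θ * k / β * s ^ 2 :=
    calc _ ≤ s ^ 2 / β * (θ * (c * G ^ 2 - d + k) + θ ^ 2 * G ^ 2) := by gcongr
      _ = _ := by ring
  rw [taylorConst]
  linarith [mul_le_mul_of_nonneg_left (hfrac.trans hgrad) hθ]

theorem exp_add_laplacian_exp_le (P : TamePotential U C) (hβ : 0 < β) (hθ : 0 ≤ θ) (hcθ : c + θ ≤ β)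
    (hd : 0 ≤ d) (hk : 0 ≤ k) (hs : 0 ≤ s) (hsU : s * U x ≤ 1)
    (hlap : Δ U (eulerStep s U x 0) ≤ c * ‖gradient U (eulerStep s U x 0)‖ ^ 2 - d + k) :
    exp (θ * U (eulerStep s U x 0)) +
        s ^ 2 / β * Δ (fun z => exp (θ * U z)) (eulerStep s U x 0) ≤
      (exp (-(θ * d / β) * s ^ 2) +
          taylorConst θ C * exp (taylorConst θ C + θ * k / β) * (s * U x) ^ 4) * exp (θ * U x) +
        θ * k / β * exp (taylorConst θ C + θ * k / β) * exp (θ * U x) * s ^ 2 := by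
  have hR := P.taylorConst_nonneg hθ
  have hs1 := P.le_one_of_mul_le_one hs hsU
  have hsU0 : 0 ≤ s * U x := mul_nonneg hs (P.pos x).le
  have hrem : taylorConst θ C * (s * U x) ^ 4 + θ * k / β * s ^ 2 ≤
      taylorConst θ C + θ * k / β := by
    gcongr
    · exact mul_le_of_le_one_right hR (pow_le_one₀ hsU0 hsU)
    · exact mul_le_of_le_one_right (by positivity) (pow_le_one₀ hs hs1)
  set m := eulerStep s U x 0
  set w := s ^ 2 / β * (θ * Δ U m + θ ^ 2 * ‖gradient U m‖ ^ 2)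
  calc exp (θ * U m) + s ^ 2 / β * Δ (fun z => exp (θ * U z)) m
      = exp (θ * U m) * (w + 1) := by
        rw [laplacian_exp_mul (P.contDiff.of_le (by norm_num))]; ring
    _ ≤ exp (θ * U m) * exp w := by gcongr; exact add_one_le_exp w
    _ = exp (θ * U x) * exp (θ * (U m - U x) + w) := by
      rw [← exp_add, ← exp_add]; ring_nf
    _ ≤ exp (θ * U x) * exp (-(θ * d / β) * s ^ 2 +
        (taylorConst θ C * (s * U x) ^ 4 + θ * k / β * s ^ 2)) := by
      refine mul_le_mul_of_nonneg_left (exp_le_exp.2 ?_) (exp_pos _).le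
      exact P.exponent_le hβ hθ hcθ hs hsU hlap
    _ ≤ exp (θ * U x) * (exp (-(θ * d / β) * s ^ 2) +
        (taylorConst θ C * (s * U x) ^ 4 + θ * k / β * s ^ 2) *
          exp (taylorConst θ C + θ * k / β)) := by
      gcongr
      refine exp_add_le_exp_add_mul_exp ?_ (by positivity) hrem
      rw [neg_mul, neg_nonpos]
      positivity
    _ = _ := by ring

/-- Below the level `E` the drift inequality is not available, but there `U x` is bounded and the
failure only contributes to the additive constant. -/
theorem exists_exp_add_laplacian_exp_le (P : TamePotential U C) (hβ : 0 < β) (hθ : 0 ≤ θ)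
    (hc : 0 ≤ c) (hcθ : c + θ ≤ β) (hd : 0 ≤ d)
    (hdrift : ∀ z, E < U z → Δ U z ≤ c * ‖gradient U z‖ ^ 2 - d) :
    ∃ A ≥ 0, ∃ B ≥ 0, ∀ ⦃s x⦄, 0 ≤ s → s * U x ≤ 1 →
      exp (θ * U (eulerStep s U x 0)) +
          s ^ 2 / β * Δ (fun z => exp (θ * U z)) (eulerStep s U x 0) ≤
        (exp (-(θ * d / β) * s ^ 2) + A * (s * U x) ^ 4) * exp (θ * U x) + B * s ^ 2 := by
  have hC := P.nonneg
  have hR := P.taylorConst_nonneg hθ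
  set k := n * (C * |E|) + d
  have hk : 0 ≤ k := by positivity
  set M := exp (taylorConst θ C + θ * k / β) with hM
  refine ⟨taylorConst θ C * M, by positivity,
    θ * k / β * M * exp (θ * (|E| * exp (C * (1 + C)))), by positivity, fun s x hs hsU => ?_⟩
  set m := eulerStep s U x 0
  rcases lt_or_ge E (U m) with hm | hm
  · have h := P.exp_add_laplacian_exp_le hβ hθ hcθ hd le_rfl hs hsU (by simpa using hdrift m hm)
    have hM0 : exp (taylorConst θ C + θ * 0 / β) ≤ M := by rw [hM]; gcongr
    calc _ ≤ _ := h
      _ = (exp (-(θ * d / β) * s ^ 2) + taylorConst θ C * exp (taylorConst θ C + θ * 0 / β) *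
          (s * U x) ^ 4) * exp (θ * U x) + 0 := by ring
      _ ≤ _ := by gcongr; positivity
  · have hlap : Δ U m ≤ c * ‖gradient U m‖ ^ 2 - d + k := by
      have hmE : (n : ℝ) * (C * U m) ≤ n * (C * |E|) := by gcongr; exact hm.trans (le_abs_self E)
      have hgrad : 0 ≤ c * ‖gradient U m‖ ^ 2 := by positivity
      have hlap_le := P.laplacian_le m
      rw [finrank_euclideanSpace_fin] at hlap_le
      linarith
    have hx : U x ≤ |E| * exp (C * (1 + C)) := by
      refine (P.le_mul_exp_norm_sub m x).trans ?_
      rw [norm_sub_rev]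
      gcongr
      · exact hm.trans (le_abs_self E)
      · exact P.norm_eulerStep_sub_le_one_add hs hsU (by simp)
    have hexp : exp (θ * U x) ≤ exp (θ * (|E| * exp (C * (1 + C)))) := by gcongr
    have hlow := mul_le_mul_of_nonneg_left hexp (by positivity : 0 ≤ θ * k / β * M * s ^ 2)
    linarith [P.exp_add_laplacian_exp_le hβ hθ hcθ hd hk hs hsU hlap]

end TamePotential

end Drift

section LocalDrift

variable {n : ℕ} {β s θ C c d E : ℝ} {U : Euc n → ℝ} {x : Euc n}

theorem integrable_accept_comp_eulerStep (hβ : 0 < β) (hs : 0 < s) (hU : ContDiff ℝ 1 U)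
    (x : Euc n) :
    Integrable (fun ξ => accept n β (s ^ 2) U x (eulerStep s U x ξ))
      (isotropicGaussian (Euc n) (β / 4)) := by
  have hprob := isotropicGaussian.isProbabilityMeasure (E := Euc n) (b := β / 4) (by positivity)
  refine .of_bound ((continuous_accept hβ (pow_pos hs 2) hU x).comp
    (continuous_eulerStep s U x)).aestronglyMeasurable 1 (.of_forall fun ξ => ?_)
  rw [norm_of_nonneg (accept_nonneg hβ (pow_pos hs 2) U x _)]
  exact accept_le_one β (s ^ 2) U x _

theorem accept_mul_exp_eulerStep_eq (β s θ : ℝ) (U : Euc n → ℝ) (x ξ : Euc n) :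
    accept n β (s ^ 2) U x (eulerStep s U x ξ) * exp (θ * U (eulerStep s U x ξ)) =
      meanIncrement β s θ U x ξ +
        accept n β (s ^ 2) U x (eulerStep s U x ξ) * exp (θ * U x) := by
  rw [meanIncrement]
  ring

theorem integrable_accept_mul_eulerDensity_mul_exp (hβ : 0 < β) (hθ : 0 ≤ θ) (hθβ : θ < β)
    (hs : 0 < s) (hU : ContDiff ℝ 1 U) (x : Euc n) :
    Integrable fun y =>
      accept n β (s ^ 2) U x y * eulerDensity n β (s ^ 2) U x y * exp (θ * U y) := by
  simp_rw [mul_right_comm _ (eulerDensity n β (s ^ 2) U x _)]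
  rw [integrable_mul_eulerDensity_iff hβ hs
    (f := fun y => accept n β (s ^ 2) U x y * exp (θ * U y))]
  simp_rw [accept_mul_exp_eulerStep_eq]
  exact (integrable_meanIncrement hβ hθ hθβ hs hU x).add
    ((integrable_accept_comp_eulerStep hβ hs hU x).mul_const _)

theorem integral_accept_mul_exp_add_eq (hβ : 0 < β) (hθ : 0 ≤ θ) (hθβ : θ < β)
    (hs : 0 < s) (hU : ContDiff ℝ 1 U) (x : Euc n) :
    (∫ y, accept n β (s ^ 2) U x y * eulerDensity n β (s ^ 2) U x y * exp (θ * U y)) +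
        (1 - ∫ y, accept n β (s ^ 2) U x y * eulerDensity n β (s ^ 2) U x y) * exp (θ * U x) =
      exp (θ * U x) +
        ∫ ξ, meanIncrement β s θ U x ξ ∂isotropicGaussian (Euc n) (β / 4) := by
  simp_rw [mul_right_comm _ (eulerDensity n β (s ^ 2) U x _)]
  rw [integral_mul_eulerDensity hβ hs U x fun y => accept n β (s ^ 2) U x y * exp (θ * U y),
    integral_mul_eulerDensity hβ hs]
  simp_rw [accept_mul_exp_eulerStep_eq]
  rw [integral_add (integrable_meanIncrement hβ hθ hθβ hs hU x)
    ((integrable_accept_comp_eulerStep hβ hs hU x).mul_const _), integral_mul_const]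
  ring

theorem mul_le_one_of_lt_sq_rpow (hs : 0 < s) {u : ℝ} (hu : u < (s ^ 2) ^ (-(1 : ℝ) / 2)) :
    s * u ≤ 1 := by
  rw [neg_div, rpow_neg (sq_nonneg s), ← sqrt_eq_rpow, sqrt_sq hs.le] at hu
  exact (mul_le_mul_of_nonneg_left hu.le hs.le).trans_eq (mul_inv_cancel₀ hs.ne')

theorem Assumption1.exists_tamePotential (hU : Assumption1 n β U) :
    ∃ C, TamePotential U C := by
  obtain ⟨C, -, hC⟩ := hU.deriv_bound
  simp_rw [sup_le_iff] at hC
  refine ⟨C, hU.smooth, hU.one_le, fun k hk hk4 x => ?_⟩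
  obtain ⟨⟨⟨h4, h3⟩, h2⟩, h1⟩ := hC x
  interval_cases k
  · rw [norm_iteratedFDeriv_one]
    exact (LinearIsometryEquiv.norm_map _ _).symm.trans_le h1
  all_goals assumption

theorem Assumption1.lapl_le_sub (hU : Assumption1 n β U) (hx : hU.EB < U x) :
    lapl U x ≤ hU.c * ‖gradient U x‖ ^ 2 - hU.d := by
  linarith [hU.driftB x hx, le_mul_of_one_le_right hU.d_pos.le (hU.one_le x)]

theorem mala_local_drift_general (P : TamePotential U C) (hc : 0 ≤ c) (hd : 0 < d)
    (hdrift : ∀ x, E < U x → lapl U x ≤ c * ‖gradient U x‖ ^ 2 - d)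
    (hθ : θ ∈ Set.Ioo 0 (β - c)) :
    ∃ C > (0:ℝ), ∃ γ > (0:ℝ), ∃ K > (0:ℝ),
      ∀ h : ℝ, 0 < h → h < 1 → ∀ x : Euc n, U x < h ^ (-(1:ℝ)/2) →
        Integrable
          (fun y => accept n β h U x y * eulerDensity n β h U x y * exp (θ * U y)) volume ∧
        (∫ y, accept n β h U x y * eulerDensity n β h U x y * exp (θ * U y))
            + (1 - ∫ y, accept n β h U x y * eulerDensity n β h U x y) * exp (θ * U x)
          ≤ (exp (-γ * h) + C * U x ^ 4 * h ^ 2) * exp (θ * U x)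
            + (K / γ) * (1 - exp (-γ * h)) := by
  obtain ⟨hθ0, hθc⟩ := hθ
  have hβ : 0 < β := by linarith
  have hθβ : θ < β := by linarith
  have hU1 : ContDiff ℝ 1 U := P.contDiff.of_le (by norm_num)
  simp_rw [lapl_eq_laplacian] at hdrift
  obtain ⟨A, hA, B, hB, hmean⟩ :=
    P.exists_exp_add_laplacian_exp_le hβ hθ0.le hc (by linarith) hd.le hdrift
  set R :=
    incrementConst β θ C / 2 * ∫ ξ, noiseWeight θ C ξ ∂isotropicGaussian (Euc n) (β / 4) with hR
  set γ := θ * d / β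
  have hγ : 0 < γ := by positivity
  refine ⟨A + |R| + 1, by positivity, γ, hγ, (B + 1) * (1 + γ), by positivity,
    fun h hh hh1 x hx => ?_⟩
  obtain ⟨s, hs, rfl⟩ : ∃ s, 0 < s ∧ s ^ 2 = h := ⟨√h, sqrt_pos.2 hh, sq_sqrt hh.le⟩
  have hsU := mul_le_one_of_lt_sq_rpow hs hx
  refine ⟨integrable_accept_mul_eulerDensity_mul_exp hβ hθ0.le hθβ hs hU1 x, ?_⟩
  rw [integral_accept_mul_exp_add_eq hβ hθ0.le hθβ hs hU1]
  have hincrement := P.integral_meanIncrement_le hβ hθ0.le hθβ hs hsU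
  rw [← hR] at hincrement
  have hadditive : B * s ^ 2 ≤ (B + 1) * (1 + γ) / γ * (1 - exp (-γ * s ^ 2)) := by
    rw [mul_div_assoc, mul_assoc]
    gcongr
    · linarith
    · exact le_div_mul_one_sub_exp_neg hγ hh.le hh1.le
  have hrem :
      R * ((s * U x) ^ 4 * exp (θ * U x)) ≤ (|R| + 1) * ((s * U x) ^ 4 * exp (θ * U x)) :=
    mul_le_mul_of_nonneg_right (by linarith [le_abs_self R]) (by positivity)
  linarith [hmean hs.le hsU]

end LocalDrift

/-- Local drift condition for MALA. -/
theorem mala_local_drift (n : ℕ) (β : ℝ) (hβ : 0 < β)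
    (U : Euc n → ℝ) (hU : Assumption1 n β U) :
    ∃ θ ∈ Set.Ioo (0:ℝ) (β - hU.c), ∃ C > (0:ℝ), ∃ γ > (0:ℝ), ∃ K > (0:ℝ),
      ∀ h : ℝ, 0 < h → h < 1 → ∀ x : Euc n, U x < h ^ (-(1:ℝ)/2) →
        Integrable
          (fun y => accept n β h U x y * eulerDensity n β h U x y * exp (θ * U y)) volume ∧
        (∫ y, accept n β h U x y * eulerDensity n β h U x y * exp (θ * U y))
            + (1 - ∫ y, accept n β h U x y * eulerDensity n β h U x y) * exp (θ * U x)
          ≤ (exp (-γ * h) + C * U x ^ 4 * h ^ 2) * exp (θ * U x)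
            + (K / γ) * (1 - exp (-γ * h)) := by
  obtain ⟨C, P⟩ := hU.exists_tamePotential
  obtain ⟨θ, hθ⟩ := Set.nonempty_Ioo.2 (sub_pos.2 hU.c_lt)
  exact ⟨θ, hθ, mala_local_drift_general P hU.c_pos.le hU.d_pos (fun _ => hU.lapl_le_sub) hθ⟩

end
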